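/- arXiv:1506.06539 — 10 statements merged into one kernel-verified Lean document; each statement's English description precedes it below -/
import Mathlib

section
/- Let N ≤ M be nonnegative integers, let λ_1,…,λ_M be pairwise distinct complex numbers, let μ_1,…,μ_N be complex numbers, let c ∈ ℂ with c ≠ 0, and let λ_s ∈ ℂ satisfy (λ_s−λ_j)² + c² ≠ 0 for all j = 1,…,M. Then i·Σ_{j=1}^{M} [2c/((λ_s−λ_j)²+c²)]·[∏_{m=1}^{N}(μ_m−λ_j) / ∏_{m=1, m≠j}^{M}(λ_m−λ_j)] = ∏_{m=1}^{N}(μ_m−λ_s−ic)/∏_{m=1}^{M}(λ_m−λ_s−ic) − ∏_{m=1}^{N}(μ_m−λ_s+ic)/∏_{m=1}^{M}(λ_m−λ_s+ic). -/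
open Complex Finset

open Polynomial in
lemma partial_fraction_aux {N M : ℕ} (hNM : N ≤ M)
    (v : Fin M → ℂ) (hv : Function.Injective v) (w : Fin N → ℂ) :
    ∃ K : ℂ, ∀ y : ℂ, (∀ i, y ≠ v i) →
      (∏ m, (y - w m)) / (∏ m, (y - v m)) =
        K + ∑ j, (∏ m ∈ Finset.univ.erase j, (v j - v m))⁻¹ * (y - v j)⁻¹ *
          ∏ m, (v j - w m) := by
  set P := Lagrange.nodal Finset.univ w with hP
  set Q := Lagrange.nodal Finset.univ v with hQ
  have hQm : Q.Monic := Lagrange.nodal_monic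
  have hdiv : P %ₘ Q + Q * (P /ₘ Q) = P := Polynomial.modByMonic_add_div P Q
  have hdeg : (P %ₘ Q).degree < (Finset.univ : Finset (Fin M)).card := by
    have := Polynomial.degree_modByMonic_lt P hQm
    rwa [hQ, Lagrange.degree_nodal] at this
  have hconst : (P /ₘ Q).natDegree = 0 := by
    rw [Polynomial.natDegree_divByMonic P hQm, hP, hQ, Lagrange.natDegree_nodal,
      Lagrange.natDegree_nodal]
    simpa using Nat.sub_eq_zero_of_le hNM
  obtain ⟨K, hK⟩ := Polynomial.natDegree_eq_zero.mp hconst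
  have hR := Lagrange.eq_interpolate (v := v) hv.injOn hdeg
  refine ⟨K, fun y hy => ?_⟩
  have hyQ : Q.eval y ≠ 0 := Lagrange.eval_nodal_not_at_node (fun i _ => hy i)
  have hPe : ∀ x, P.eval x = ∏ m, (x - w m) := fun x => Lagrange.eval_nodal
  have hQe : ∀ x, Q.eval x = ∏ m, (x - v m) := fun x => Lagrange.eval_nodal
  have hnode : ∀ i, (P %ₘ Q).eval (v i) = P.eval (v i) := by
    intro i
    have h0 : Q.eval (v i) = 0 := Lagrange.eval_nodal_at_node (Finset.mem_univ i)
    conv_rhs => rw [← hdiv]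
    simp [h0]
  have h1 : (P %ₘ Q).eval y = Q.eval y * ∑ j, Lagrange.nodalWeight Finset.univ v j *
      (y - v j)⁻¹ * P.eval (v j) := by
    rw [hR, Lagrange.eval_interpolate_not_at_node _ (fun i _ => hy i)]
    simp only [hnode]
    rfl
  have h2 : P.eval y = Q.eval y * (∑ j, Lagrange.nodalWeight Finset.univ v j *
      (y - v j)⁻¹ * P.eval (v j)) + Q.eval y * K := by
    rw [← h1]
    conv_lhs => rw [← hdiv, ← hK]
    simp
  rw [← hPe, ← hQe, div_eq_iff hyQ, h2]
  simp only [Lagrange.nodalWeight, hPe, Finset.prod_inv_distrib]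
  ring

/-- Residue-sum identity: for `N ≤ M`, pairwise distinct `λ₁,…,λ_M`, arbitrary `μ₁,…,μ_N`,
`c ≠ 0` and `λ_s` with `(λ_s−λ_j)² + c² ≠ 0` for all `j`,
`i·Σ_j [2c/((λ_s−λ_j)²+c²)]·[∏_m(μ_m−λ_j)/∏_{m≠j}(λ_m−λ_j)]
  = ∏_m(μ_m−λ_s−ic)/∏_m(λ_m−λ_s−ic) − ∏_m(μ_m−λ_s+ic)/∏_m(λ_m−λ_s+ic)`. -/
theorem residue_sum_identity {N M : ℕ} (hNM : N ≤ M)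
    (lam : Fin M → ℂ) (hlam : Function.Injective lam)
    (μ : Fin N → ℂ) (c : ℂ) (hc : c ≠ 0) (ls : ℂ)
    (hls : ∀ j, (ls - lam j) ^ 2 + c ^ 2 ≠ 0) :
    I * ∑ j, 2 * c / ((ls - lam j) ^ 2 + c ^ 2) *
        ((∏ m, (μ m - lam j)) / ∏ m ∈ Finset.univ.erase j, (lam m - lam j)) =
      (∏ m, (μ m - ls - I * c)) / (∏ m, (lam m - ls - I * c)) -
        (∏ m, (μ m - ls + I * c)) / (∏ m, (lam m - ls + I * c)) := by
  obtain ⟨K, hK⟩ := partial_fraction_aux hNM (fun j => - lam j)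
    (fun a b h => hlam (neg_injective h)) (fun j => - μ j)
  have hfac : ∀ j, (ls - lam j) ^ 2 + c ^ 2 = (lam j - ls - I * c) * (lam j - ls + I * c) := by
    intro j
    linear_combination (c ^ 2) * I_sq
  have ha : ∀ j, lam j - ls - I * c ≠ 0 := fun j h => hls j (by rw [hfac, h, zero_mul])
  have hb : ∀ j, lam j - ls + I * c ≠ 0 := fun j h => hls j (by rw [hfac, h, mul_zero])
  have h1 := hK (- ls - I * c) (fun i h => ha i (by linear_combination h))
  have h2 := hK (- ls + I * c) (fun i h => hb i (by linear_combination h))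
  have e1 : ∀ x : ℂ, - ls - I * c - - x = x - ls - I * c := fun x => by ring
  have e2 : ∀ x : ℂ, - ls + I * c - - x = x - ls + I * c := fun x => by ring
  have e3 : ∀ x y : ℂ, - x - - y = y - x := fun x y => by ring
  simp only [e1, e2, e3] at h1 h2
  rw [h1, h2, add_sub_add_left_eq_sub, ← Finset.sum_sub_distrib, Finset.mul_sum]
  refine Finset.sum_congr rfl fun j _ => ?_
  have key : I * (2 * c / ((ls - lam j) ^ 2 + c ^ 2)) =
      (lam j - ls - I * c)⁻¹ - (lam j - ls + I * c)⁻¹ := by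
    rw [hfac, inv_sub_inv (ha j) (hb j), mul_div_assoc']
    congr 1
    ring
  rw [← mul_assoc, key]
  ring
end

section
/- Let N be a positive integer, let λ_1,…,λ_N be pairwise distinct complex numbers and let c ∈ ℂ be arbitrary. Then Σ_{k=1}^{N} ∏_{m=1, m≠k}^{N} (λ_k−λ_m+ic)/(λ_k−λ_m) = N. -/
open Complex Finset

/-- For a positive integer `N`, pairwise distinct `λ₁,…,λ_N` and arbitrary `c ∈ ℂ`,
`Σ_k ∏_{m≠k} (λ_k−λ_m+ic)/(λ_k−λ_m) = N`. -/
theorem sum_scattering_factors {N : ℕ} (hN : 0 < N)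
    (lam : Fin N → ℂ) (hlam : Function.Injective lam) (c : ℂ) :
    ∑ k, ∏ m ∈ Finset.univ.erase k, ((lam k - lam m + I * c) / (lam k - lam m)) =
      (N : ℂ) := by
  generalize I * c = a
  have hne : ∀ k, ∀ m ∈ Finset.univ.erase k, lam k - lam m ≠ 0 := by
    intro k m hm h
    exact (Finset.ne_of_mem_erase hm) (hlam (sub_eq_zero.mp h)).symm
  by_cases ha : a = 0
  · subst ha
    have : ∀ k, ∏ m ∈ Finset.univ.erase k, ((lam k - lam m + 0) / (lam k - lam m)) = 1 := by
      intro k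
      apply Finset.prod_eq_one
      intro m hm
      rw [add_zero, div_self (hne k m hm)]
    rw [Finset.sum_congr rfl (fun k _ => this k)]
    simp
  have hc : #(Finset.univ : Finset (Fin N)) = N := by simp
  have hdeg : (Lagrange.nodal Finset.univ (fun m => lam m - a)
      - Lagrange.nodal Finset.univ lam).degree < #(Finset.univ : Finset (Fin N)) := by
    rw [← Lagrange.degree_nodal (s := Finset.univ) (v := fun m => lam m - a)]
    apply Polynomial.degree_sub_lt_left
    · rw [Lagrange.degree_nodal, Lagrange.degree_nodal]
    · exact Lagrange.nodal_ne_zero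
    · rw [Lagrange.nodal_monic.leadingCoeff, Lagrange.nodal_monic.leadingCoeff]
  have key := Lagrange.coeff_eq_sum (s := Finset.univ) (v := lam) hlam.injOn hdeg
  rw [Polynomial.coeff_sub, Lagrange.nodal_eq, Lagrange.nodal_eq,
    Polynomial.prod_X_sub_C_coeff_card_pred _ _ (by omega),
    Polynomial.prod_X_sub_C_coeff_card_pred _ _ (by omega)] at key
  apply mul_left_cancel₀ ha
  rw [Finset.mul_sum]
  have e : a * (N : ℂ) = -∑ i, (lam i - a) - -∑ i, lam i := by
    simp [Finset.sum_sub_distrib]; ring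
  rw [e, key]
  apply Finset.sum_congr rfl
  intro k _
  rw [← Lagrange.nodal_eq, ← Lagrange.nodal_eq, Polynomial.eval_sub,
    Lagrange.eval_nodal_at_node (Finset.mem_univ k), Lagrange.eval_nodal, sub_zero,
    ← Finset.mul_prod_erase _ _ (Finset.mem_univ k), Finset.prod_div_distrib, mul_div_assoc]
  simp only [sub_sub_cancel]
  congr 2
  apply Finset.prod_congr rfl
  intro m _
  ring
end

section
/- Fix c ∈ ℂ with c ≠ 0, an integer R ≥ 1, and an integer N ≥ 0. Let μ_1,…,μ_N be complex numbers, λ_1,…,λ_{N+R} pairwise distinct complex numbers with μ_k ≠ λ_j and λ_m−λ_j±ic ≠ 0 for all indices, and let λ_p, λ_p′, λ_s, λ_s′ ∈ ℂ be any parameters such that all quantities below are well defined (i.e. (x−λ_j)²+c² ≠ 0 and Ṽ⁺_x ≠ Ṽ⁻_x for x ∈ {λ_p, λ_p′, λ_s, λ_s′}, and Ṽ⁺_j ≠ Ṽ⁻_j for all j). Then H_R(μ;λ;λ_p,λ_s) = H_R(μ;λ;λ_p′,λ_s′); that is, the expression H_R is independent of the auxiliary parameters λ_p and λ_s. -/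
open Complex Finset Matrix

namespace LL

noncomputable def Kk (c x y : ℂ) : ℂ := 2 * c / ((x - y) ^ 2 + c ^ 2)

noncomputable def Vp {N M : ℕ} (c : ℂ) (μ : Fin N → ℂ) (lam : Fin M → ℂ) (x : ℂ) : ℂ :=
  (∏ m, (μ m - x + I * c)) / ∏ m, (lam m - x + I * c)

noncomputable def Vm {N M : ℕ} (c : ℂ) (μ : Fin N → ℂ) (lam : Fin M → ℂ) (x : ℂ) : ℂ :=
  (∏ m, (μ m - x - I * c)) / ∏ m, (lam m - x - I * c)

noncomputable def Xi {N M : ℕ} (μ : Fin N → ℂ) (lam : Fin M → ℂ) (j : Fin M) : ℂ :=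
  (∏ m, (μ m - lam j)) / ∏ m ∈ Finset.univ.erase j, (lam m - lam j)

noncomputable def Umat {N M : ℕ} (c : ℂ) (μ : Fin N → ℂ) (lam : Fin M → ℂ) (lp ls : ℂ) :
    Matrix (Fin M) (Fin M) ℂ := fun j k =>
  I / (Vp c μ lam (lam j) - Vm c μ lam (lam j)) * Xi μ lam j *
    (Kk c (lam j) (lam k) - Kk c lp (lam k) * Kk c ls (lam j))

noncomputable def U1mat {N M : ℕ} (c : ℂ) (μ : Fin N → ℂ) (lam : Fin M → ℂ) (lp : ℂ) :
    Matrix (Fin M) (Fin M) ℂ := fun j k =>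
  I / (Vp c μ lam (lam j) - Vm c μ lam (lam j)) * Xi μ lam j *
    (Kk c (lam j) (lam k) - Kk c lp (lam k))

noncomputable def U2mat {N M : ℕ} (c : ℂ) (μ : Fin N → ℂ) (lam : Fin M → ℂ) (lp : ℂ) :
    Matrix (Fin M) (Fin M) ℂ := fun j k =>
  U1mat c μ lam lp j k + I / (Vp c μ lam (lam j) - Vm c μ lam (lam j)) * Kk c lp (lam k)

noncomputable def HR {N M : ℕ} (c sc : ℂ) (R : ℕ) (μ : Fin N → ℂ) (lam : Fin M → ℂ)
    (lp ls : ℂ) : ℂ :=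
  (I * sc) ^ R / (c ^ (2 * R - 1) * ((R - 1).factorial : ℂ)) * (-1 : ℂ) ^ (N * (R - 1)) *
    (∏ j, ∏ k, (lam j - lam k + I * c)) *
    (∏ j, ∏ k, (lam j - μ k)⁻¹) *
    (∏ j, (Vp c μ lam (lam j) - Vm c μ lam (lam j))) *
    (1 + Umat c μ lam lp ls).det /
    ((Vp c μ lam lp - Vm c μ lam lp) * (Vp c μ lam ls - Vm c μ lam ls))

noncomputable def Jcal {N : ℕ} (μ lam : Fin N → ℂ) : ℂ :=
  (∑ j, lam j - ∑ j, μ j) ^ 4 -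
    4 * (∑ j, lam j - ∑ j, μ j) * (∑ j, lam j ^ 3 - ∑ j, μ j ^ 3) +
    3 * (∑ j, lam j ^ 2 - ∑ j, μ j ^ 2) ^ 2

noncomputable def Fff {N : ℕ} (c : ℂ) (μ lam : Fin N → ℂ) (lp ls : ℂ) : ℂ :=
  (-1 : ℂ) ^ N * (Jcal μ lam / (6 * c)) *
    (∏ j, ∏ k, (lam j - lam k + I * c)) *
    (∏ j, ∏ k, (lam j - μ k)⁻¹) *
    (∏ j, (Vp c μ lam (lam j) - Vm c μ lam (lam j))) *
    (1 + Umat c μ lam lp ls).det /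
    ((Vp c μ lam lp - Vm c μ lam lp) * (Vp c μ lam ls - Vm c μ lam ls))

noncomputable def Tcal {N M : ℕ} (μ : Fin N → ℂ) (lam : Fin M → ℂ) : ℂ :=
  (1 / 2 : ℂ) * ((∑ j, lam j - ∑ j, μ j) ^ 2 - (∑ j, lam j ^ 2 - ∑ j, μ j ^ 2))

noncomputable def Gff {N M : ℕ} (c sc : ℂ) (μ : Fin N → ℂ) (lam : Fin M → ℂ) (lp ls : ℂ) : ℂ :=
  -I * (Tcal μ lam / (c * sc)) *
    (∏ j, ∏ k, (lam j - lam k + I * c)) *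
    (∏ j, ∏ k, (lam j - μ k)⁻¹) *
    (∏ j, (Vp c μ lam (lam j) - Vm c μ lam (lam j))) *
    (1 + Umat c μ lam lp ls).det /
    ((Vp c μ lam lp - Vm c μ lam lp) * (Vp c μ lam ls - Vm c μ lam ls))

noncomputable def fsc (c x y : ℂ) : ℂ := (x - y + I * c) / (x - y)

noncomputable def stringRap (cb : ℝ) (M : ℕ) (δ : Fin M → ℂ) (j : Fin M) : ℂ :=
  I * ((cb : ℂ) / 2) * ((M : ℂ) - 1 - 2 * (j.val : ℂ)) + I * δ j

end LL

open LL


theorem aux_det {n : Type*} [Fintype n] [DecidableEq n] (A : Matrix n n ℂ) (v w w' p : n → ℂ)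
    (hv : v ᵥ* A = 0) (hs : v ⬝ᵥ w' ≠ 0) :
    (A + vecMulVec w p).det * (v ⬝ᵥ w') = (A + vecMulVec w' p).det * (v ⬝ᵥ w) := by
  set s' := v ⬝ᵥ w' with hs'
  set T : Matrix n n ℂ := 1 + vecMulVec (s'⁻¹ • (w - w')) v with hT
  have hTA : T * A = A := by
    rw [hT, add_mul, one_mul, vecMulVec_mul, hv, vecMulVec_zero, add_zero]
  have hTw : T *ᵥ w' = w := by
    rw [hT, add_mulVec, one_mulVec, vecMulVec_mulVec, ← hs']
    ext i
    simp
    field_simp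
    ring
  have h1 : A + vecMulVec w p = T * (A + vecMulVec w' p) := by
    rw [mul_add, hTA, mul_vecMulVec, hTw]
  have hdT : T.det = s'⁻¹ * (v ⬝ᵥ w) := by
    rw [hT, vecMulVec_eq Unit, det_one_add_replicateCol_mul_replicateRow, dotProduct_smul,
      dotProduct_sub, ← hs', smul_eq_mul]
    field_simp
    ring
  rw [h1, det_mul, hdT]
  field_simp

theorem aux_det2 {n : Type*} [Fintype n] [DecidableEq n] (A : Matrix n n ℂ) (v w p p' : n → ℂ)
    (hv : A *ᵥ v = 0) (hs : v ⬝ᵥ p' ≠ 0) :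
    (A + vecMulVec w p).det * (v ⬝ᵥ p') = (A + vecMulVec w p').det * (v ⬝ᵥ p) := by
  have := aux_det Aᵀ v p p' w (by rw [vecMul_transpose, hv]) hs
  rw [← det_transpose (A + vecMulVec w p), ← det_transpose (A + vecMulVec w p'),
    transpose_add, transpose_add, transpose_vecMulVec, transpose_vecMulVec]
  exact this

theorem aux_pf {N M : ℕ} (hNM : N < M) (μ : Fin N → ℂ) (lam : Fin M → ℂ)
    (hinj : Function.Injective lam) (y : ℂ) (hy : ∀ j, lam j - y ≠ 0) :
    (∏ m, (μ m - y)) / ∏ m, (lam m - y) = ∑ j, Xi μ lam j * (lam j - y)⁻¹ := by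
  set P : Polynomial ℂ := ∏ m, (Polynomial.X + Polynomial.C (μ m)) with hP
  have hev : ∀ x, P.eval (-x) = ∏ m, (μ m - x) := by
    intro x
    rw [hP, Polynomial.eval_prod]
    refine Finset.prod_congr rfl fun m _ => ?_
    simp
    ring
  have hdeg : P.degree < ((Finset.univ : Finset (Fin M)).card : ℕ) := by
    rw [hP, Polynomial.degree_prod]
    simp [Polynomial.degree_X_add_C, hNM]
  have hi : Set.InjOn (fun j => - lam j) (Finset.univ : Finset (Fin M)) := by
    intro a _ b _ h
    exact hinj (neg_injective h)
  have h := Lagrange.eq_interpolate hi hdeg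
  have h2 := congrArg (Polynomial.eval (-y)) h
  rw [Lagrange.eval_interpolate_not_at_node, Lagrange.eval_nodal, hev] at h2
  · have e : ∏ i, (-y - -lam i) = ∏ m, (lam m - y) :=
      Finset.prod_congr rfl fun m _ => by ring
    have hne : ∏ m, (lam m - y) ≠ 0 := Finset.prod_ne_zero_iff.2 fun m _ => hy m
    rw [h2, e, mul_div_cancel_left₀ _ hne]
    refine Finset.sum_congr rfl fun j _ => ?_
    rw [hev, Lagrange.nodalWeight, Xi, Finset.prod_inv_distrib]
    have e2 : ∏ i ∈ Finset.univ.erase j, (-lam j - -lam i)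
        = ∏ i ∈ Finset.univ.erase j, (lam i - lam j) :=
      Finset.prod_congr rfl fun m _ => by ring
    rw [e2, show -y - -lam j = lam j - y by ring]
    ring
  · intro i _ h
    exact hy i (by linear_combination h)

theorem aux_V {N M : ℕ} (hNM : N < M) (c : ℂ) (μ : Fin N → ℂ) (lam : Fin M → ℂ)
    (hinj : Function.Injective lam) (x : ℂ) (hx : ∀ j, (x - lam j) ^ 2 + c ^ 2 ≠ 0) :
    ∑ j, Xi μ lam j * Kk c x (lam j) = I * (Vp c μ lam x - Vm c μ lam x) := by
  have hI : I ^ 2 = -1 := I_sq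
  have hf : ∀ j, (lam j - (x - I * c)) * (lam j - (x + I * c)) = (x - lam j) ^ 2 + c ^ 2 := by
    intro j
    linear_combination (- c ^ 2) * hI
  have h1 : ∀ j, lam j - (x - I * c) ≠ 0 := fun j h => hx j (by rw [← hf, h, zero_mul])
  have h2 : ∀ j, lam j - (x + I * c) ≠ 0 := fun j h => hx j (by rw [← hf, h, mul_zero])
  have e1 : Vp c μ lam x = ∑ j, Xi μ lam j * (lam j - (x - I * c))⁻¹ := by
    rw [← aux_pf hNM μ lam hinj _ h1, Vp]
    congr 1 <;> exact Finset.prod_congr rfl fun m _ => by ring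
  have e2 : Vm c μ lam x = ∑ j, Xi μ lam j * (lam j - (x + I * c))⁻¹ := by
    rw [← aux_pf hNM μ lam hinj _ h2, Vm]
    congr 1 <;> exact Finset.prod_congr rfl fun m _ => by ring
  rw [e1, e2, ← Finset.sum_sub_distrib, Finset.mul_sum]
  refine Finset.sum_congr rfl fun j _ => ?_
  rw [Kk, ← hf]
  have := h1 j
  have := h2 j
  rw [inv_eq_one_div, inv_eq_one_div, ← mul_sub, div_sub_div _ _ (h1 j) (h2 j)]
  rw [mul_div_assoc', mul_div_assoc', mul_div_assoc']
  congr 1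
  linear_combination (2 * c * Xi μ lam j) * hI

theorem Kk_symm (c x y : ℂ) : Kk c x y = Kk c y x := by
  rw [Kk, Kk, show (x - y) ^ 2 = (y - x) ^ 2 by ring]

/-- The determinant formula `H_R` for the form factor of `Ψ^R(0)` is independent of the
auxiliary parameters `λ_p` and `λ_s`. -/
theorem HR_independent_of_aux {N R : ℕ} (c sc : ℂ) (hc : c ≠ 0) (hsc : sc ^ 2 = c)
    (hR : 1 ≤ R) (μ : Fin N → ℂ) (lam : Fin (N + R) → ℂ)
    (hinj : Function.Injective lam)
    (hmulam : ∀ k j, μ k ≠ lam j)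
    (hpm : ∀ m j, lam m - lam j + I * c ≠ 0 ∧ lam m - lam j - I * c ≠ 0)
    (lp lp' ls ls' : ℂ)
    (haux : ∀ x ∈ ({lp, lp', ls, ls'} : Set ℂ),
      (∀ j, (x - lam j) ^ 2 + c ^ 2 ≠ 0) ∧ Vp c μ lam x ≠ Vm c μ lam x)
    (hV : ∀ j, Vp c μ lam (lam j) ≠ Vm c μ lam (lam j)) :
    HR c sc R μ lam lp ls = HR c sc R μ lam lp' ls' := by
  have hNM : N < N + R := by omega
  have hI : I * I = -1 := I_mul_I
  set D : Fin (N + R) → ℂ := fun j => Vp c μ lam (lam j) - Vm c μ lam (lam j) with hD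
  set X : Fin (N + R) → ℂ := fun j => Xi μ lam j with hX
  have hD0 : ∀ j, D j ≠ 0 := fun j => sub_ne_zero.2 (hV j)
  set A : Matrix (Fin (N + R)) (Fin (N + R)) ℂ :=
    diagonal D + of fun j k => I * X j * Kk c (lam j) (lam k) with hA
  set w : ℂ → Fin (N + R) → ℂ := fun s j => -I * X j * Kk c s (lam j) with hw
  set p : ℂ → Fin (N + R) → ℂ := fun s j => Kk c s (lam j) with hp
  have hll : ∀ k j, (lam k - lam j) ^ 2 + c ^ 2 ≠ 0 := by
    intro k j h
    have h2 : (lam k - lam j + I * c) * (lam k - lam j - I * c) = 0 := by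
      linear_combination h - c ^ 2 * hI
    exact mul_ne_zero (hpm k j).1 (hpm k j).2 h2
  have hsum : ∀ k, ∑ j, X j * Kk c (lam k) (lam j) = I * D k :=
    fun k => aux_V hNM c μ lam hinj (lam k) (hll k)
  have hAl : (fun _ => (1 : ℂ)) ᵥ* A = 0 := by
    ext k
    rw [hA, vecMul_add]
    simp only [Pi.add_apply, vecMul_diagonal, Pi.zero_apply, vecMul, dotProduct, of_apply, one_mul]
    have e : ∑ j, I * X j * Kk c (lam j) (lam k) = I * ∑ j, X j * Kk c (lam k) (lam j) := by
      rw [Finset.mul_sum]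
      exact Finset.sum_congr rfl fun j _ => by rw [Kk_symm c (lam j)]; ring
    have e0 : ∑ j, diagonal D j k = D k := by
      simp [diagonal_apply]
    rw [e, hsum, e0]
    linear_combination D k * hI
  have hAr : A *ᵥ X = 0 := by
    ext j
    rw [hA, add_mulVec]
    simp only [Pi.add_apply, mulVec_diagonal, Pi.zero_apply, mulVec, dotProduct, of_apply]
    have e : ∑ k, I * X j * Kk c (lam j) (lam k) * X k
        = I * X j * ∑ k, X k * Kk c (lam j) (lam k) := by
      rw [Finset.mul_sum]
      exact Finset.sum_congr rfl fun k _ => by ring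
    have e0 : ∑ k, diagonal D j k * X k = D j * X j := by
      simp [diagonal_apply]
    rw [e, hsum, e0]
    linear_combination D j * X j * hI
  have hdet : ∀ a b, (∏ j, D j) * (1 + Umat c μ lam a b).det
      = (A + vecMulVec (w b) (p a)).det := by
    intro a b
    rw [← det_diagonal, ← det_mul]
    congr 1
    ext j k
    rw [diagonal_mul]
    have := hD0 j
    by_cases h : j = k
    · subst h
      simp only [hA, hw, hp, Matrix.add_apply, one_apply_eq, diagonal_apply_eq, of_apply,
        vecMulVec_apply, Umat]
      change D j * (1 + I / D j * X j * _) = _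
      field_simp
      ring
    · simp only [hA, hw, hp, Matrix.add_apply, one_apply_ne h, diagonal_apply_ne _ h, of_apply,
        vecMulVec_apply, Umat]
      change D j * (0 + I / D j * X j * _) = _
      field_simp
      ring
  have hone : ∀ s ∈ ({lp, lp', ls, ls'} : Set ℂ),
      (fun _ => (1 : ℂ)) ⬝ᵥ w s = Vp c μ lam s - Vm c μ lam s := by
    intro s hs
    have h := aux_V hNM c μ lam hinj s (haux s hs).1
    have e : (fun _ => (1 : ℂ)) ⬝ᵥ w s = -I * ∑ j, X j * Kk c s (lam j) := by
      rw [Finset.mul_sum]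
      exact Finset.sum_congr rfl fun j _ => by simp only [hw]; ring
    rw [e, h]
    linear_combination -(Vp c μ lam s - Vm c μ lam s) * hI
  have hXp : ∀ s ∈ ({lp, lp', ls, ls'} : Set ℂ),
      X ⬝ᵥ p s = I * (Vp c μ lam s - Vm c μ lam s) :=
    fun s hs => aux_V hNM c μ lam hinj s (haux s hs).1
  have hne : ∀ s ∈ ({lp, lp', ls, ls'} : Set ℂ), Vp c μ lam s - Vm c μ lam s ≠ 0 :=
    fun s hs => sub_ne_zero.2 (haux s hs).2
  have mp : lp ∈ ({lp, lp', ls, ls'} : Set ℂ) := by simp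
  have mp' : lp' ∈ ({lp, lp', ls, ls'} : Set ℂ) := by simp
  have ms : ls ∈ ({lp, lp', ls, ls'} : Set ℂ) := by simp
  have ms' : ls' ∈ ({lp, lp', ls, ls'} : Set ℂ) := by simp
  have k1 := aux_det A _ (w ls) (w ls') (p lp) hAl (by rw [hone _ ms']; exact hne _ ms')
  have k2 := aux_det2 A X (w ls') (p lp) (p lp') hAr
    (by rw [hXp _ mp']; exact mul_ne_zero I_ne_zero (hne _ mp'))
  rw [hone _ ms, hone _ ms', ← hdet, ← hdet] at k1
  rw [hXp _ mp, hXp _ mp', ← hdet, ← hdet] at k2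
  have n1 := hne _ mp
  have n2 := hne _ mp'
  have n3 := hne _ ms
  have n4 := hne _ ms'
  unfold HR
  rw [div_eq_div_iff (mul_ne_zero n1 n3) (mul_ne_zero n2 n4)]
  change _ * (∏ j, D j) * _ * _ = _ * (∏ j, D j) * _ * _
  generalize Vp c μ lam lp - Vm c μ lam lp = a at *
  generalize Vp c μ lam lp' - Vm c μ lam lp' = a' at *
  generalize Vp c μ lam ls - Vm c μ lam ls = b at *
  generalize Vp c μ lam ls' - Vm c μ lam ls' = b' at *
  generalize (1 + Umat c μ lam lp ls).det = d1 at *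
  generalize (1 + Umat c μ lam lp ls').det = d2 at *
  generalize (1 + Umat c μ lam lp' ls').det = d3 at *
  generalize (∏ j, D j) = Q at *
  have k2' : Q * d2 * a' = Q * d3 * a := by
    apply mul_left_cancel₀ I_ne_zero
    linear_combination k2
  generalize (I * sc) ^ R / (c ^ (2 * R - 1) * ((R - 1).factorial : ℂ)) * (-1 : ℂ) ^ (N * (R - 1)) *
    (∏ j, ∏ k, (lam j - lam k + I * c)) * (∏ j, ∏ k, (lam j - μ k)⁻¹) = G
  linear_combination G * a' * k1 + G * b * k2'
end

section
/- Fix c ∈ ℂ with c ≠ 0 and an integer N ≥ 1. Let μ_1,…,μ_N be complex numbers, λ_1,…,λ_N pairwise distinct complex numbers with μ_k ≠ λ_j and λ_m−λ_j±ic ≠ 0 for all indices, and let λ_p, λ_p′, λ_s, λ_s′ ∈ ℂ be any parameters such that all quantities below are well defined (i.e. (x−λ_j)²+c² ≠ 0 and V⁺_x ≠ V⁻_x for x ∈ {λ_p, λ_p′, λ_s, λ_s′}, and V⁺_j ≠ V⁻_j for all j). Then F(μ;λ;λ_p,λ_s) = F(μ;λ;λ_p′,λ_s′); that is, the expression F is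 independent of the auxiliary parameters λ_p and λ_s. -/
open Complex Finset Matrix

open LL

namespace LL

theorem aux_h {n : Type*} [Fintype n] [DecidableEq n] (A : Matrix n n ℂ) (hA : A.det = 0)
    (v u : n → ℂ) :
    (A - vecMulVec u v).det = ((fromBlocks A 0 (replicateRow Unit v) (1 : Matrix Unit Unit ℂ)).updateCol
      (Sum.inr ()) (Sum.elim u 0)).det := by
  have e1 : fromBlocks A (replicateCol Unit u) (replicateRow Unit v) (1 : Matrix Unit Unit ℂ) =
    ((fromBlocks A 0 (replicateRow Unit v) (1 : Matrix Unit Unit ℂ)).updateCol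
      (Sum.inr ()) (Sum.elim u 0 + Sum.elim (0 : n → ℂ) (1 : Unit → ℂ))) := by
    ext i j
    rcases i with i | i <;> rcases j with j | j <;> simp
  have e2 : ((fromBlocks A 0 (replicateRow Unit v) (1 : Matrix Unit Unit ℂ)).updateCol
      (Sum.inr ()) (Sum.elim 0 1)) = fromBlocks A 0 (replicateRow Unit v) (1 : Matrix Unit Unit ℂ) := by
    ext i j
    rcases i with i | i <;> rcases j with j | j <;> simp
  have e3 : vecMulVec u v = replicateCol Unit u * replicateRow Unit v := by
    ext i j; simp [vecMulVec_apply, Matrix.mul_apply]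
  rw [e3, ← det_fromBlocks_one₂₂, e1, det_updateCol_add, e2, det_fromBlocks_zero₁₂, hA]
  simp

theorem aux_u {n : Type*} [Fintype n] [DecidableEq n] (A : Matrix n n ℂ)
    (y : n → ℂ) (hy : y ≠ 0) (hyA : y ᵥ* A = 0) (v u u' : n → ℂ) :
    (y ⬝ᵥ u') * (A - vecMulVec u v).det = (y ⬝ᵥ u) * (A - vecMulVec u' v).det := by
  have hA : A.det = 0 := exists_vecMul_eq_zero_iff.mp ⟨y, hy, hyA⟩
  have h0 : (A - vecMulVec ((y ⬝ᵥ u') • u + (-(y ⬝ᵥ u)) • u') v).det = 0 := by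
    refine exists_vecMul_eq_zero_iff.mp ⟨y, hy, ?_⟩
    rw [vecMul_sub, hyA, vecMul_vecMulVec]
    ext i
    simp [dotProduct_add, dotProduct_smul]
    left; ring
  rw [aux_h A hA] at h0 ⊢
  rw [aux_h A hA]
  have e : (Sum.elim ((y ⬝ᵥ u') • u + (-(y ⬝ᵥ u)) • u') 0 : n ⊕ Unit → ℂ) =
     (y ⬝ᵥ u') • Sum.elim u 0 + (-(y ⬝ᵥ u)) • Sum.elim u' 0 := by
    ext i
    rcases i with i | i <;> simp
  rw [e, det_updateCol_add, det_updateCol_smul, det_updateCol_smul] at h0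
  linear_combination h0

theorem aux_v {n : Type*} [Fintype n] [DecidableEq n] (A : Matrix n n ℂ)
    (z : n → ℂ) (hz : z ≠ 0) (hzA : A *ᵥ z = 0) (u v v' : n → ℂ) :
    (z ⬝ᵥ v') * (A - vecMulVec u v).det = (z ⬝ᵥ v) * (A - vecMulVec u v').det := by
  have := aux_u Aᵀ z hz (by rw [vecMul_transpose, hzA]) u v v'
  rw [← det_transpose (A - vecMulVec u v), ← det_transpose (A - vecMulVec u v')]
  simpa [transpose_sub, transpose_vecMulVec] using this

theorem aux_pf {N : ℕ} (hN : 1 ≤ N) (μ lam : Fin N → ℂ) (hinj : Function.Injective lam)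
    (z : ℂ) (hz : ∀ j, lam j - z ≠ 0) :
    (∏ m, (μ m - z)) / ∏ m, (lam m - z) = 1 + ∑ j, Xi μ lam j / (lam j - z) := by
  classical
  set p : Polynomial ℂ := Lagrange.nodal Finset.univ (fun i => - μ i) with hp
  set q : Polynomial ℂ := Lagrange.nodal Finset.univ (fun i => - lam i) with hq
  have hpd : p.degree = N := by simp [hp, Lagrange.degree_nodal]
  have hqd : q.degree = N := by simp [hq, Lagrange.degree_nodal]
  have hdeg : (p - q).degree < (Finset.univ : Finset (Fin N)).card := by
    rw [Finset.card_univ, Fintype.card_fin, ← hpd]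
    refine Polynomial.degree_sub_lt_left (hpd.trans hqd.symm) Lagrange.nodal_ne_zero ?_
    rw [hp, hq, Lagrange.nodal_monic.leadingCoeff, Lagrange.nodal_monic.leadingCoeff]
  have hi : Set.InjOn (fun i => - lam i) (Finset.univ : Finset (Fin N)) :=
    fun a _ b _ h => hinj (neg_injective h)
  have h1 := Lagrange.eq_interpolate_of_eval_eq (r := fun j => ∏ m, (μ m - lam j)) hi hdeg (by
    intro i _
    rw [Polynomial.eval_sub, hq, Lagrange.eval_nodal_at_node (v := fun i => - lam i) (Finset.mem_univ i), hp, Lagrange.eval_nodal, sub_zero]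
    exact Finset.prod_congr rfl fun m _ => by ring)
  have h2 := congrArg (Polynomial.eval (-z)) h1
  rw [Lagrange.eval_interpolate_not_at_node _ (by
    intro i _ h
    exact hz i (by linear_combination h)), Polynomial.eval_sub, ← hq] at h2
  have ep : Polynomial.eval (-z) p = ∏ m, (μ m - z) := by
    rw [hp, Lagrange.eval_nodal]; exact Finset.prod_congr rfl fun m _ => by ring
  have eq : Polynomial.eval (-z) q = ∏ m, (lam m - z) := by
    rw [hq, Lagrange.eval_nodal]; exact Finset.prod_congr rfl fun m _ => by ring
  have es : (∑ i, Lagrange.nodalWeight Finset.univ (fun i => - lam i) i * (-z - - lam i)⁻¹ *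
      ∏ m, (μ m - lam i)) = ∑ j, Xi μ lam j / (lam j - z) := by
    refine Finset.sum_congr rfl fun i _ => ?_
    have : Lagrange.nodalWeight Finset.univ (fun i => - lam i) i =
        (∏ m ∈ Finset.univ.erase i, (lam m - lam i))⁻¹ := by
      rw [Lagrange.nodalWeight, ← Finset.prod_inv_distrib]
      exact Finset.prod_congr rfl fun m _ => by congr 1; ring
    rw [this, Xi, show -z - -lam i = lam i - z by ring]
    simp only [div_eq_mul_inv]; ring
  rw [ep, eq, es] at h2
  have hne : ∏ m, (lam m - z) ≠ 0 := Finset.prod_ne_zero_iff.mpr fun m _ => hz m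
  rw [div_eq_iff hne]
  linear_combination h2

theorem Kk_comm (c x y : ℂ) : Kk c x y = Kk c y x := by
  unfold Kk; congr 2; ring

theorem aux_sum {N : ℕ} (hN : 1 ≤ N) (c : ℂ) (μ lam : Fin N → ℂ) (hinj : Function.Injective lam)
    (x : ℂ) (hx : ∀ j, (x - lam j) ^ 2 + c ^ 2 ≠ 0) :
    ∑ j, Xi μ lam j * Kk c x (lam j) = I * (Vp c μ lam x - Vm c μ lam x) := by
  have hf : ∀ j, (x - lam j) ^ 2 + c ^ 2 = (lam j - x + I * c) * (lam j - x - I * c) := by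
    intro j; linear_combination (c ^ 2) * I_sq
  have hp : ∀ j, lam j - x + I * c ≠ 0 := fun j h => hx j (by rw [hf, h, zero_mul])
  have hm : ∀ j, lam j - x - I * c ≠ 0 := fun j h => hx j (by rw [hf, h, mul_zero])
  have h1 : Vp c μ lam x = 1 + ∑ j, Xi μ lam j / (lam j - x + I * c) := by
    have := aux_pf hN μ lam hinj (x - I * c) (fun j => by convert hp j using 1; ring)
    simpa only [Vp, sub_sub_eq_add_sub, sub_add_eq_add_sub] using this
  have h2 : Vm c μ lam x = 1 + ∑ j, Xi μ lam j / (lam j - x - I * c) := by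
    have := aux_pf hN μ lam hinj (x + I * c) (fun j => by convert hm j using 1; ring)
    simpa only [Vm, sub_sub] using this
  rw [h1, h2, add_sub_add_left_eq_sub, ← Finset.sum_sub_distrib, Finset.mul_sum]
  refine Finset.sum_congr rfl fun j _ => ?_
  rw [Kk, hf, div_sub_div _ _ (hp j) (hm j), mul_div_assoc', mul_div_assoc']
  congr 1
  linear_combination (2 * c * Xi μ lam j) * I_sq

end LL

/-- The determinant formula `F` for the form factor of `(Ψ†(0))²Ψ²(0)` is independent of the
auxiliary parameters `λ_p` and `λ_s`. -/
theorem F_independent_of_aux {N : ℕ} (c : ℂ) (hc : c ≠ 0) (hN : 1 ≤ N)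
    (μ lam : Fin N → ℂ) (hinj : Function.Injective lam)
    (hmulam : ∀ k j, μ k ≠ lam j)
    (hpm : ∀ m j, lam m - lam j + I * c ≠ 0 ∧ lam m - lam j - I * c ≠ 0)
    (lp lp' ls ls' : ℂ)
    (haux : ∀ x ∈ ({lp, lp', ls, ls'} : Set ℂ),
      (∀ j, (x - lam j) ^ 2 + c ^ 2 ≠ 0) ∧ Vp c μ lam x ≠ Vm c μ lam x)
    (hV : ∀ j, Vp c μ lam (lam j) ≠ Vm c μ lam (lam j)) :
    Fff c μ lam lp ls = Fff c μ lam lp' ls' := by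
  have hsq : ∀ k j, (lam k - lam j) ^ 2 + c ^ 2 ≠ 0 := by
    intro k j
    have : (lam k - lam j) ^ 2 + c ^ 2 =
        (lam k - lam j + I * c) * (lam k - lam j - I * c) := by
      linear_combination (c ^ 2) * I_sq
    rw [this]
    exact mul_ne_zero (hpm k j).1 (hpm k j).2
  have hW : ∀ j, Vp c μ lam (lam j) - Vm c μ lam (lam j) ≠ 0 := fun j => sub_ne_zero.mpr (hV j)
  set W : Fin N → ℂ := fun j => Vp c μ lam (lam j) - Vm c μ lam (lam j) with hWd
  set A : Matrix (Fin N) (Fin N) ℂ :=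
    1 + Matrix.of (fun j k => I / W j * Xi μ lam j * Kk c (lam j) (lam k)) with hA
  set u : ℂ → Fin N → ℂ := fun s j => I / W j * Xi μ lam j * Kk c s (lam j) with hu
  set v : ℂ → Fin N → ℂ := fun p k => Kk c p (lam k) with hv
  have hdec : ∀ p s, 1 + Umat c μ lam p s = A - vecMulVec (u s) (v p) := by
    intro p s
    ext j k
    simp only [hA, Matrix.add_apply, Matrix.sub_apply, vecMulVec_apply, Matrix.of_apply, Umat, hu, hv, hWd]
    ring
  have hXi : ∀ j, Xi μ lam j ≠ 0 := by
    intro j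
    refine div_ne_zero (Finset.prod_ne_zero_iff.mpr fun m _ => sub_ne_zero.mpr (hmulam m j))
      (Finset.prod_ne_zero_iff.mpr fun m hm => sub_ne_zero.mpr fun h => ?_)
    exact (Finset.mem_erase.mp hm).1 (hinj h)
  have hyA : W ᵥ* A = 0 := by
    ext k
    rw [hA, vecMul_add, vecMul_one]
    have h := aux_sum hN c μ lam hinj (lam k) (hsq k)
    have e : (W ᵥ* Matrix.of (fun j k => I / W j * Xi μ lam j * Kk c (lam j) (lam k))) k =
        I * ∑ j, Xi μ lam j * Kk c (lam k) (lam j) := by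
      simp only [vecMul, dotProduct, Matrix.of_apply]
      rw [Finset.mul_sum]
      refine Finset.sum_congr rfl fun j _ => ?_
      rw [Kk_comm c (lam j)]
      have := hW j
      change W j ≠ 0 at this
      field_simp
    rw [Pi.add_apply, e, h]
    change W k + I * (I * W k) = 0
    linear_combination W k * I_sq
  have hzA : A *ᵥ (Xi μ lam) = 0 := by
    ext k
    rw [hA, add_mulVec, one_mulVec]
    have h := aux_sum hN c μ lam hinj (lam k) (hsq k)
    have e : (Matrix.of (fun j k => I / W j * Xi μ lam j * Kk c (lam j) (lam k)) *ᵥ Xi μ lam) k =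
        I / W k * Xi μ lam k * ∑ j, Xi μ lam j * Kk c (lam k) (lam j) := by
      simp only [mulVec, dotProduct, Matrix.of_apply]
      rw [Finset.mul_sum]
      exact Finset.sum_congr rfl fun j _ => by ring
    rw [Pi.add_apply, e, h]
    change Xi μ lam k + I / W k * Xi μ lam k * (I * W k) = 0
    have := hW k
    change W k ≠ 0 at this
    field_simp
    linear_combination Xi μ lam k * I_sq
  have hy : W ≠ 0 := fun h => hW ⟨0, hN⟩ (congrFun h ⟨0, hN⟩)
  have hz : Xi μ lam ≠ 0 := fun h => hXi ⟨0, hN⟩ (congrFun h ⟨0, hN⟩)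
  have hyu : ∀ s ∈ ({lp, lp', ls, ls'} : Set ℂ), W ⬝ᵥ u s = -(Vp c μ lam s - Vm c μ lam s) := by
    intro s hs
    have h := aux_sum hN c μ lam hinj s (haux s hs).1
    have e : W ⬝ᵥ u s = I * ∑ j, Xi μ lam j * Kk c s (lam j) := by
      simp only [dotProduct, hu]
      rw [Finset.mul_sum]
      refine Finset.sum_congr rfl fun j _ => ?_
      have := hW j
      change W j ≠ 0 at this
      field_simp
    rw [e, h]
    linear_combination (Vp c μ lam s - Vm c μ lam s) * I_sq
  have hzv : ∀ p ∈ ({lp, lp', ls, ls'} : Set ℂ),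
      Xi μ lam ⬝ᵥ v p = I * (Vp c μ lam p - Vm c μ lam p) :=
    fun p hp => aux_sum hN c μ lam hinj p (haux p hp).1
  have m1 : lp ∈ ({lp, lp', ls, ls'} : Set ℂ) := by simp
  have m2 : lp' ∈ ({lp, lp', ls, ls'} : Set ℂ) := by simp
  have m3 : ls ∈ ({lp, lp', ls, ls'} : Set ℂ) := by simp
  have m4 : ls' ∈ ({lp, lp', ls, ls'} : Set ℂ) := by simp
  have k1 := aux_u A W hy hyA (v lp) (u ls) (u ls')
  have k2 := aux_v A (Xi μ lam) hz hzA (u ls') (v lp) (v lp')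
  rw [hyu _ m3, hyu _ m4] at k1
  rw [hzv _ m1, hzv _ m2] at k2
  have w1 := sub_ne_zero.mpr (haux _ m1).2
  have w2 := sub_ne_zero.mpr (haux _ m2).2
  have w3 := sub_ne_zero.mpr (haux _ m3).2
  have w4 := sub_ne_zero.mpr (haux _ m4).2
  unfold Fff
  rw [hdec, hdec, mul_div_assoc, mul_div_assoc]
  congr 1
  rw [div_eq_div_iff (mul_ne_zero w1 w3) (mul_ne_zero w2 w4)]
  have k3 : (Vp c μ lam lp' - Vm c μ lam lp') * (A - vecMulVec (u ls') (v lp)).det =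
    (Vp c μ lam lp - Vm c μ lam lp) * (A - vecMulVec (u ls') (v lp')).det :=
    mul_left_cancel₀ I_ne_zero (by linear_combination k2)
  linear_combination (-(Vp c μ lam lp' - Vm c μ lam lp')) * k1 +
    (Vp c μ lam ls - Vm c μ lam ls) * k3
end

section
/- Fix c ∈ ℂ with c ≠ 0, a square root √c of c, and an integer R ≥ 1. Let λ_1,…,λ_R be pairwise distinct complex numbers with λ_m−λ_j±ic ≠ 0 for all m ≠ j, and let λ_p, λ_s ∈ ℂ satisfy (λ_p−λ_j)²+c² ≠ 0, (λ_s−λ_j)²+c² ≠ 0, Ṽ⁺_j ≠ Ṽ⁻_j for all j, Ṽ⁺_p ≠ Ṽ⁻_p and Ṽ⁺_s ≠ Ṽ⁻_s. Then [(i√c)^R/(c^{2R−1}(R−1)!)]·∏_{j,k=1}^{R}(λ_j−λ_k+ic)·∏_{j=1}^{R}(Ṽ⁺_j−Ṽ⁻_j)·det_R(δ_{jk}+Ũ_{jk}) / [(Ṽ⁺_p−Ṽ⁻_p)(Ṽ⁺_s−Ṽ⁻_s)] = (−i√c)^R·R!. -/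
open Complex Finset Matrix

open LL

theorem prodNeg {ι : Type*} (t : Finset ι) (f g : ι → ℂ) (N : ℕ) (hN : t.card = N)
    (h : ∀ i ∈ t, f i = - g i) : ∏ i ∈ t, f i = (-1) ^ N * ∏ i ∈ t, g i := by
  rw [← hN, ← Finset.prod_const, ← Finset.prod_mul_distrib]
  exact Finset.prod_congr rfl fun i hi => by rw [h i hi]; ring

open Polynomial in
theorem lagC {n : ℕ} (lam : Fin (n+1) → ℂ) (hinj : Function.Injective lam) (p : ℂ[X])
    (hp : p.degree < ((n+1 : ℕ) : WithBot ℕ)) :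
    ∑ k, (∏ m ∈ Finset.univ.erase k, (lam m - lam k))⁻¹ * p.eval (lam k) = (-1)^n * p.coeff n := by
  have h := Lagrange.coeff_eq_sum (s := Finset.univ) (v := lam) hinj.injOn (P := p) (by simpa using hp)
  simp only [Finset.card_univ, Fintype.card_fin, Nat.add_sub_cancel] at h
  rw [h, Finset.mul_sum]
  refine Finset.sum_congr rfl fun k _ => ?_
  have : ∏ m ∈ Finset.univ.erase k, (lam m - lam k) =
      (-1)^n * ∏ m ∈ Finset.univ.erase k, (lam k - lam m) := by
    exact prodNeg _ _ _ _ (by simp) fun i _ => by ring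
  rw [this, mul_inv, ← inv_pow, inv_neg, inv_one]
  ring

open Polynomial in
theorem lagE {n : ℕ} (lam : Fin (n+1) → ℂ) (hinj : Function.Injective lam) (p : ℂ[X])
    (hp : p.degree < ((n+1 : ℕ) : WithBot ℕ)) (x : ℂ) (hx : ∀ k, lam k - x ≠ 0) :
    ∑ k, (∏ m ∈ Finset.univ.erase k, (lam m - lam k))⁻¹ * p.eval (lam k) * (lam k - x)⁻¹ =
      p.eval x * (∏ m, (lam m - x))⁻¹ := by
  have h := Lagrange.eval_interpolate_not_at_node (s := Finset.univ) (v := lam)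
    (fun i => p.eval (lam i)) (x := x) (fun i _ hh => hx i (by rw [hh]; ring))
  rw [← Lagrange.eq_interpolate hinj.injOn (by simpa using hp), Lagrange.eval_nodal] at h
  have h0 : ∏ m, (lam m - x) ≠ 0 := Finset.prod_ne_zero_iff.2 fun i _ => hx i
  have h1 : ∏ m, (x - lam m) = (-1)^(n+1) * ∏ m, (lam m - x) := by
    exact prodNeg _ _ _ _ (by simp) fun i _ => by ring
  rw [h, h1]
  rw [eq_mul_inv_iff_mul_eq₀ h0, Finset.sum_mul, Finset.mul_sum]
  refine Finset.sum_congr rfl fun k _ => ?_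
  have : ∏ m ∈ Finset.univ.erase k, (lam m - lam k) =
      (-1)^n * ∏ m ∈ Finset.univ.erase k, (lam k - lam m) := by
    exact prodNeg _ _ _ _ (by simp) fun i _ => by ring
  rw [this, mul_inv, ← inv_pow, inv_neg, inv_one, Lagrange.nodalWeight, Finset.prod_inv_distrib,
    ← neg_sub (lam k) x, inv_neg]
  ring

open Polynomial in
theorem detHankel {n : ℕ} (lam : Fin (n+1) → ℂ) (hinj : Function.Injective lam) (s : ℂ)
    (hne : ∀ m j, lam m - lam j + s ≠ 0) (h : Fin (n+1) → ℂ)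
    (hh : ∀ k, h k = (∏ m ∈ Finset.univ.erase k, (lam m - lam k))⁻¹ *
      (∏ m, (lam m - lam k + s))⁻¹) :
    (Matrix.of fun i j : Fin n => ∑ k, h k * lam k ^ (i : ℕ) * lam k ^ (j : ℕ)).det =
      ((n : ℂ) + 1) * s * (Matrix.vandermonde lam).det ^ 2 * ∏ k, h k := by
  set q : ℂ[X] := Lagrange.nodal Finset.univ (fun k => lam k + s) -
    Lagrange.nodal Finset.univ lam with hq
  have hqd : q.degree < ((n+1 : ℕ) : WithBot ℕ) := by
    have := Polynomial.degree_sub_lt_left (p := Lagrange.nodal Finset.univ (fun k => lam k + s))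
      (q := Lagrange.nodal Finset.univ lam) (by simp [Lagrange.degree_nodal])
      Lagrange.nodal_ne_zero (by
        rw [(Lagrange.nodal_monic).leadingCoeff, (Lagrange.nodal_monic).leadingCoeff])
    simpa [Lagrange.degree_nodal] using this
  have hqn : q.coeff n = -(((n : ℂ) + 1) * s) := by
    have e : ∀ v : Fin (n+1) → ℂ, (Lagrange.nodal Finset.univ v).coeff n = - ∑ i, v i := by
      intro v
      have := Polynomial.prod_X_sub_C_coeff_card_pred Finset.univ v (by simp)
      simpa [Lagrange.nodal] using this
    rw [hq, coeff_sub, e, e, Finset.sum_add_distrib]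
    simp
  have hqe : ∀ k, q.eval (lam k) = (-1)^(n+1) * ∏ m, (lam m - lam k + s) := by
    intro k
    rw [hq, eval_sub, Lagrange.eval_nodal_at_node (Finset.mem_univ k), Lagrange.eval_nodal, sub_zero]
    exact prodNeg _ _ _ _ (by simp) fun i _ => by ring
  have hev : ∀ x, q.eval x = ∑ i : Fin (n+1), q.coeff i * x ^ (i : ℕ) := by
    intro x
    rw [Fin.sum_univ_eq_sum_range (fun i => q.coeff i * x ^ i)]
    apply eval_eq_sum_range'
    by_cases h0 : q = 0
    · rw [h0]; simp
    · exact (natDegree_lt_iff_degree_lt h0).2 hqd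
  let E : Matrix (Fin (n+1)) (Fin (n+1)) ℂ := Matrix.of fun l m =>
    if m = Fin.last n then q.coeff l else if l = m then 1 else 0
  have hE : E.det = -(((n : ℂ) + 1) * s) := by
    rw [Matrix.det_of_isUpperTriangular]
    · rw [Fin.prod_univ_castSucc]
      simp [E, hqn, Fin.castSucc_ne_last]
    · intro l m hlm
      have hlm' : m < l := hlm
      have h1 : m ≠ Fin.last n := fun h => by
        rw [h] at hlm'; exact absurd hlm' (not_lt.2 (Fin.le_last l))
      simp [E, h1, hlm'.ne']
  let W := Matrix.vandermonde lam
  let F := (W * E).transpose * Matrix.diagonal h * W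
  have hWE : ∀ k m, (W * E) k m = if m = Fin.last n then q.eval (lam k) else lam k ^ (m : ℕ) := by
    intro k m
    rw [Matrix.mul_apply]
    by_cases hm : m = Fin.last n
    · simp only [E, W, Matrix.of_apply, hm, if_true, Matrix.vandermonde_apply, hev]
      exact Finset.sum_congr rfl fun i _ => mul_comm _ _
    · simp [E, W, Matrix.of_apply, hm, Matrix.vandermonde_apply]
  have hF : ∀ i j, F i j = ∑ k, (W * E) k i * h k * lam k ^ (j : ℕ) := by
    intro i j
    simp only [F]
    rw [Matrix.mul_apply]
    simp only [Matrix.mul_diagonal, W, Matrix.vandermonde_apply, Matrix.transpose_apply]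
  have hFl : ∀ j : Fin (n+1), F (Fin.last n) j = if j = Fin.last n then -1 else 0 := by
    intro j
    rw [hF]
    have : ∀ k, (W * E) k (Fin.last n) * h k * lam k ^ (j : ℕ) =
        (-1)^(n+1) * ((∏ m ∈ Finset.univ.erase k, (lam m - lam k))⁻¹ * (X ^ (j : ℕ) : ℂ[X]).eval (lam k)) := by
      intro k
      have h0 : ∏ m, (lam m - lam k + s) ≠ 0 := Finset.prod_ne_zero_iff.2 fun m _ => hne m k
      rw [hWE, if_pos rfl, hqe, hh, eval_pow, eval_X]
      field_simp
    rw [Finset.sum_congr rfl fun k _ => this k, ← Finset.mul_sum, lagC lam hinj]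
    · rw [coeff_X_pow, ← mul_assoc, ← pow_add]
      have : Odd (n + 1 + n) := ⟨n, by ring⟩
      rw [this.neg_one_pow]
      by_cases hj : j = Fin.last n
      · simp [hj]
      · have : n ≠ (j : ℕ) := fun hh => hj (Fin.ext (by simp [← hh]))
        simp [hj, this]
    · rw [degree_X_pow]; exact_mod_cast j.2
  have hd1 : F.det = -(Matrix.of fun i j : Fin n => ∑ k, h k * lam k ^ (i : ℕ) * lam k ^ (j : ℕ)).det := by
    rw [Matrix.det_succ_row F (Fin.last n), Finset.sum_eq_single (Fin.last n)]
    · rw [hFl, if_pos rfl]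
      have : F.submatrix (Fin.last n).succAbove (Fin.last n).succAbove =
          (Matrix.of fun i j : Fin n => ∑ k, h k * lam k ^ (i : ℕ) * lam k ^ (j : ℕ)) := by
        ext i j
        simp only [Matrix.submatrix_apply, Fin.succAbove_last, hF, hWE, Matrix.of_apply,
          Fin.castSucc_ne_last, if_false, Fin.val_castSucc]
        exact Finset.sum_congr rfl fun k _ => by ring
      rw [this, Even.neg_one_pow (n := (Fin.last n : ℕ) + (Fin.last n : ℕ)) ⟨n, by simp⟩]
      ring
    · intro b _ hb
      rw [hFl, if_neg hb]; ring
    · simp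
  have hd2 : F.det = W.det * E.det * (∏ k, h k) * W.det := by
    simp only [F]
    rw [Matrix.det_mul, Matrix.det_mul, Matrix.det_transpose, Matrix.det_mul, Matrix.det_diagonal]
  rw [hd1, hE] at hd2
  linear_combination -hd2

open Polynomial in
/-- the backward difference of a monomial, as a polynomial -/
theorem nablaEval (n : ℕ) (s x : ℂ) (m : Fin (n+1)) :
    x ^ (m : ℕ) - (x - s) ^ (m : ℕ) =
      ∑ l : Fin n, ((X ^ (m : ℕ) - (X - C s) ^ (m : ℕ) : ℂ[X]).coeff l) * x ^ (l : ℕ) := by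
  have hc : ∀ l : ℕ, (m : ℕ) ≤ l → (X ^ (m : ℕ) - (X - C s) ^ (m : ℕ) : ℂ[X]).coeff l = 0 := by
    intro l hl
    rw [sub_eq_add_neg X (C s), ← C_neg, coeff_sub, coeff_X_add_C_pow, coeff_X_pow]
    rcases hl.eq_or_lt with h | h
    · simp [← h]
    · simp [h.ne', Nat.choose_eq_zero_of_lt h]
  have := eval_eq_sum_range' (p := (X ^ (m : ℕ) - (X - C s) ^ (m : ℕ) : ℂ[X])) (n := n+1)
    (by
      rw [Nat.lt_succ_iff, natDegree_le_iff_coeff_eq_zero]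
      intro N hN
      exact hc N (by omega)) x
  rw [Finset.sum_range_succ, hc n (by omega), zero_mul, add_zero,
    ← Fin.sum_univ_eq_sum_range (fun l => (X ^ (m : ℕ) - (X - C s) ^ (m : ℕ) : ℂ[X]).coeff l * x ^ l)] at this
  rw [← this]; simp

open Polynomial in
theorem detX (n : ℕ) (s : ℂ) (a : Fin (n+1) → ℂ) :
    (Matrix.of fun i m : Fin (n+1) => (Fin.cases (a m)
      (fun l : Fin n => (X ^ (m : ℕ) - (X - C s) ^ (m : ℕ) : ℂ[X]).coeff l) i : ℂ)).det =
      a 0 * (n.factorial * s ^ n) := by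
  have hc : ∀ m l : ℕ, m ≤ l → (X ^ (m : ℕ) - (X - C s) ^ (m : ℕ) : ℂ[X]).coeff l = 0 := by
    intro m l hl
    rw [sub_eq_add_neg X (C s), ← C_neg, coeff_sub, coeff_X_add_C_pow, coeff_X_pow]
    rcases hl.eq_or_lt with h | h
    · simp [← h]
    · simp [h.ne', Nat.choose_eq_zero_of_lt h]
  have hd : ∀ l : ℕ, (X ^ (l+1) - (X - C s) ^ (l+1) : ℂ[X]).coeff l = (l + 1) * s := by
    intro l
    rw [sub_eq_add_neg X (C s), ← C_neg, coeff_sub, coeff_X_add_C_pow, coeff_X_pow]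
    simp [Nat.choose_succ_self_right]
    ring
  rw [Matrix.det_of_isUpperTriangular]
  · rw [Fin.prod_univ_succ]
    simp only [Matrix.of_apply, Fin.cases_zero, Fin.cases_succ, Fin.val_succ, hd]
    rw [Finset.prod_mul_distrib, Fin.prod_univ_eq_prod_range (fun i => (i : ℂ) + 1)]
    simp only [Finset.prod_const, Finset.card_univ, Fintype.card_fin]
    rw [← Finset.prod_range_add_one_eq_factorial]
    push_cast
    rfl
  · intro i m him
    have him' : m < i := him
    rcases Fin.eq_zero_or_eq_succ i with h | ⟨l, rfl⟩
    · subst h; exact absurd him' (Fin.not_lt_zero _)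
    · simp only [Matrix.of_apply, Fin.cases_succ]
      apply hc
      have : (m : ℕ) < l + 1 := by have := Fin.lt_def.1 him'; rwa [Fin.val_succ] at this
      omega

open Polynomial in
theorem formEq {n : ℕ} (lam : Fin (n+1) → ℂ) (hinj : Function.Injective lam) (s : ℂ)
    (hne : ∀ m j, lam m - lam j + s ≠ 0) (x vp vm : Fin (n+1) → ℂ)
    (hx : ∀ k, x k = (∏ m ∈ Finset.univ.erase k, (lam m - lam k))⁻¹)
    (hvp : ∀ k, vp k = (∏ m, (lam m - lam k + s))⁻¹)
    (hvm : ∀ k, vm k = (∏ m, (lam m - lam k - s))⁻¹) (a b : Fin (n+1)) :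
    ∑ j, lam j ^ (a : ℕ) * x j * ((vp j - vm j) * lam j ^ (b : ℕ) +
      ∑ k, ((lam k - lam j - s)⁻¹ - (lam k - lam j + s)⁻¹) * x k * lam k ^ (b : ℕ)) =
    ∑ k, x k * vp k * (lam k ^ (a : ℕ) - (lam k - s) ^ (a : ℕ)) *
      (lam k ^ (b : ℕ) - (lam k - s) ^ (b : ℕ)) := by
  have hne' : ∀ m j, lam m - lam j - s ≠ 0 := fun m j h => hne j m (by linear_combination -h)
  have L : ∀ (p : ℂ[X]), p.degree < ((n+1 : ℕ) : WithBot ℕ) → ∀ y, (∀ k, lam k - y ≠ 0) →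
      ∑ k, x k * p.eval (lam k) * (lam k - y)⁻¹ = p.eval y * (∏ m, (lam m - y))⁻¹ := by
    intro p hp y hy
    simp only [hx]
    exact lagE lam hinj p hp y hy
  have Lp : ∀ (p : ℂ[X]), p.degree < ((n+1 : ℕ) : WithBot ℕ) → ∀ j,
      ∑ k, x k * p.eval (lam k) * (lam k - lam j + s)⁻¹ = p.eval (lam j - s) * vp j := by
    intro p hp j
    have := L p hp (lam j - s) (fun k h => hne k j (by linear_combination h))
    rw [hvp]
    simpa only [sub_sub_eq_add_sub, sub_add_eq_add_sub] using this
  have Lm : ∀ (p : ℂ[X]), p.degree < ((n+1 : ℕ) : WithBot ℕ) → ∀ j,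
      ∑ k, x k * p.eval (lam k) * (lam k - lam j - s)⁻¹ = p.eval (lam j + s) * vm j := by
    intro p hp j
    have := L p hp (lam j + s) (fun k h => hne' k j (by linear_combination h))
    rw [hvm]
    simpa only [sub_add_eq_sub_sub] using this
  have hX : ∀ m : Fin (n+1), (X ^ (m : ℕ) : ℂ[X]).degree < ((n+1 : ℕ) : WithBot ℕ) := by
    intro m; rw [degree_X_pow]; exact_mod_cast m.2
  set G : ℂ[X] := X ^ (b : ℕ) - (X - C s) ^ (b : ℕ) with hG
  have hGd : G.degree < ((n+1 : ℕ) : WithBot ℕ) := by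
    refine lt_of_le_of_lt (degree_sub_le _ _) (max_lt (hX b) ?_)
    rw [degree_pow, degree_X_sub_C]; simpa using (by exact_mod_cast b.2)
  have hGe : ∀ y, G.eval y = y ^ (b : ℕ) - (y - s) ^ (b : ℕ) := by intro y; simp [hG]
  have s1 : ∀ j, (vp j - vm j) * lam j ^ (b : ℕ) +
      ∑ k, ((lam k - lam j - s)⁻¹ - (lam k - lam j + s)⁻¹) * x k * lam k ^ (b : ℕ) =
      vp j * G.eval (lam j) + ∑ k, x k * G.eval (lam k) * (lam k - lam j - s)⁻¹ := by
    intro j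
    have e1 := Lp _ (hX b) j
    have e2 := Lm _ (hX b) j
    rw [Lm G hGd j, hGe, hGe]
    simp only [eval_pow, eval_X] at e1 e2
    have : ∑ k, ((lam k - lam j - s)⁻¹ - (lam k - lam j + s)⁻¹) * x k * lam k ^ (b : ℕ) =
      ∑ k, x k * lam k ^ (b : ℕ) * (lam k - lam j - s)⁻¹ -
      ∑ k, x k * lam k ^ (b : ℕ) * (lam k - lam j + s)⁻¹ := by
      rw [← Finset.sum_sub_distrib]
      exact Finset.sum_congr rfl fun k _ => by ring
    rw [this, e1, e2, add_sub_cancel_right]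
    ring
  simp only [s1, mul_add, Finset.sum_add_distrib, Finset.mul_sum]
  rw [Finset.sum_comm, ← Finset.sum_add_distrib]
  refine Finset.sum_congr rfl fun k _ => ?_
  have e := Lp _ (hX a) k
  simp only [eval_pow, eval_X] at e
  have : ∑ j, lam j ^ (a : ℕ) * x j * (x k * G.eval (lam k) * (lam k - lam j - s)⁻¹) =
      -(x k * G.eval (lam k)) * ∑ j, x j * lam j ^ (a : ℕ) * (lam j - lam k + s)⁻¹ := by
    rw [Finset.mul_sum]
    refine Finset.sum_congr rfl fun j _ => ?_
    rw [show lam k - lam j - s = -(lam j - lam k + s) by ring, inv_neg]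
    ring
  rw [this, e, hGe]
  ring

open Polynomial in
theorem detM {n : ℕ} (lam : Fin (n+1) → ℂ) (hinj : Function.Injective lam) (s : ℂ)
    (hne : ∀ m j, lam m - lam j + s ≠ 0) (x vp vm w u : Fin (n+1) → ℂ)
    (hx : ∀ k, x k = (∏ m ∈ Finset.univ.erase k, (lam m - lam k))⁻¹)
    (hvp : ∀ k, vp k = (∏ m, (lam m - lam k + s))⁻¹)
    (hvm : ∀ k, vm k = (∏ m, (lam m - lam k - s))⁻¹)
    (M : Matrix (Fin (n+1)) (Fin (n+1)) ℂ)
    (hM : ∀ j k, M j k = (if j = k then vp j - vm j else 0) +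
      x j * (((lam k - lam j - s)⁻¹ - (lam k - lam j + s)⁻¹) - I * (w j * u k))) :
    M.det = -I * (∑ j, x j * w j) * (∑ k, x k * u k) * (n.factorial * s ^ n) ^ 2 *
      ((n + 1) * s) * ∏ k, vp k := by
  set W := Matrix.vandermonde lam with hW
  let H : Matrix (Fin n) (Fin n) ℂ :=
    Matrix.of fun i j : Fin n => ∑ k, (x k * vp k) * lam k ^ (i : ℕ) * lam k ^ (j : ℕ)
  have hH : H.det = ((n : ℂ) + 1) * s * W.det ^ 2 * ∏ k, (x k * vp k) :=
    detHankel lam hinj s hne _ (fun k => by rw [hx, hvp])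
  let N : Matrix (Fin (n+1)) (Fin (n+1)) ℂ := Matrix.of fun i j =>
    (Fin.cases (Fin.cases (-I) (fun _ => 0) j) (fun i' => Fin.cases 0 (fun j' => H i' j') j) i : ℂ)
  have hN : N.det = -I * H.det := by
    rw [Matrix.det_succ_row_zero, Fin.sum_univ_succ, Finset.sum_eq_zero]
    · have : N.submatrix Fin.succ (Fin.succAbove 0) = H := by
        ext i j; simp [N]
      rw [this]; simp [N]
    · intro i _; simp [N]
  let Y : (Fin (n+1) → ℂ) → Matrix (Fin (n+1)) (Fin (n+1)) ℂ := fun a =>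
    Matrix.of fun i m : Fin (n+1) => (Fin.cases (a m)
      (fun l : Fin n => (X ^ (m : ℕ) - (X - C s) ^ (m : ℕ) : ℂ[X]).coeff l) i : ℂ)
  have hY : ∀ a, (Y a).det = a 0 * (n.factorial * s ^ n) := fun a => detX n s a
  let A : Fin (n+1) → ℂ := fun m => ∑ j, x j * w j * lam j ^ (m : ℕ)
  let B : Fin (n+1) → ℂ := fun m => ∑ j, x j * u j * lam j ^ (m : ℕ)
  have key : W.transpose * (M * Matrix.diagonal x) * W = (Y A).transpose * N * Y B := by
    ext a b
    have r : ((Y A).transpose * N * Y B) a b = -I * A a * B b +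
        ∑ k, x k * vp k * (lam k ^ (a : ℕ) - (lam k - s) ^ (a : ℕ)) *
          (lam k ^ (b : ℕ) - (lam k - s) ^ (b : ℕ)) := by
      rw [Matrix.mul_assoc, Matrix.mul_apply, Fin.sum_univ_succ]
      congr 1
      · rw [Matrix.mul_apply, Fin.sum_univ_succ]
        simp [Y, N]
        ring
      · conv_lhs => simp only [Matrix.mul_apply, Fin.sum_univ_succ (n := n)]
        simp only [Y, N, H, Matrix.transpose_apply, Matrix.of_apply, Fin.cases_zero,
          Fin.cases_succ, zero_mul, zero_add]
        simp only [nablaEval n s]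
        simp only [Finset.sum_mul, Finset.mul_sum]
        conv_lhs =>
          enter [2, i]
          rw [Finset.sum_comm]
        rw [Finset.sum_comm]
        refine Finset.sum_congr rfl fun k _ => ?_
        rw [Finset.sum_comm]
        refine Finset.sum_congr rfl fun i _ => ?_
        refine Finset.sum_congr rfl fun j _ => ?_
        ring
    have l : (W.transpose * (M * Matrix.diagonal x) * W) a b = 
        ∑ j, lam j ^ (a : ℕ) * x j * ((vp j - vm j) * lam j ^ (b : ℕ) +
          ∑ k, ((lam k - lam j - s)⁻¹ - (lam k - lam j + s)⁻¹) * x k * lam k ^ (b : ℕ))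
        + -I * A a * B b := by
      rw [Matrix.mul_assoc, Matrix.mul_apply]
      have e : -I * A a * B b = ∑ j, lam j ^ (a : ℕ) * x j * (-I * w j * B b) := by
        simp only [A, Finset.mul_sum, Finset.sum_mul]
        exact Finset.sum_congr rfl fun j _ => by ring
      rw [e, ← Finset.sum_add_distrib]
      refine Finset.sum_congr rfl fun j _ => ?_
      rw [Matrix.mul_apply]
      simp only [Matrix.mul_diagonal, hM, W, Matrix.vandermonde_apply, Matrix.transpose_apply, add_mul,
        Finset.sum_add_distrib, ite_mul, zero_mul, Finset.sum_ite_eq, Finset.mem_univ, if_true, B]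
      have e2 : ∑ k, x j * ((lam k - lam j - s)⁻¹ - (lam k - lam j + s)⁻¹ - I * (w j * u k)) * x k *
          lam k ^ (b : ℕ) = x j * (∑ k, ((lam k - lam j - s)⁻¹ - (lam k - lam j + s)⁻¹) * x k * lam k ^ (b : ℕ)
            + -I * w j * ∑ k, x k * u k * lam k ^ (b : ℕ)) := by
        rw [Finset.mul_sum, ← Finset.sum_add_distrib, Finset.mul_sum]
        exact Finset.sum_congr rfl fun k _ => by ring
      rw [e2]; ring
    rw [l, r, formEq lam hinj s hne x vp vm hx hvp hvm]
    ring
  have hd := congrArg Matrix.det key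
  simp only [Matrix.det_mul, Matrix.det_transpose, Matrix.det_diagonal, hY, hN, hH] at hd
  have hW0 : W.det ≠ 0 := Matrix.det_vandermonde_ne_zero_iff.2 hinj
  have hx0 : ∏ k, x k ≠ 0 := Finset.prod_ne_zero_iff.2 fun k _ => by
    rw [hx]
    refine inv_ne_zero (Finset.prod_ne_zero_iff.2 fun m hm => sub_ne_zero.2 fun h => ?_)
    exact (Finset.mem_erase.1 hm).1 (hinj h)
  rw [Finset.prod_mul_distrib] at hd
  have hA : A 0 = ∑ j, x j * w j := by simp [A]
  have hB : B 0 = ∑ j, x j * u j := by simp [B]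
  rw [hA, hB] at hd
  have h3 : W.det ^ 2 * ∏ k, x k ≠ 0 := mul_ne_zero (pow_ne_zero _ hW0) hx0
  apply mul_left_cancel₀ h3
  linear_combination hd

theorem VpE {R : ℕ} (c : ℂ) (lam : Fin R → ℂ) (x : ℂ) :
    Vp c (Fin.elim0 : Fin 0 → ℂ) lam x = (∏ m, (lam m - x + I * c))⁻¹ := by
  simp [Vp]

theorem VmE {R : ℕ} (c : ℂ) (lam : Fin R → ℂ) (x : ℂ) :
    Vm c (Fin.elim0 : Fin 0 → ℂ) lam x = (∏ m, (lam m - x - I * c))⁻¹ := by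
  simp [Vm]

theorem XiE {R : ℕ} (lam : Fin R → ℂ) (j : Fin R) :
    Xi (Fin.elim0 : Fin 0 → ℂ) lam j = (∏ m ∈ Finset.univ.erase j, (lam m - lam j))⁻¹ := by
  simp [Xi]

theorem KkE (c x y : ℂ) (h1 : y - x + I * c ≠ 0) (h2 : y - x - I * c ≠ 0) :
    I * Kk c x y = (y - x - I * c)⁻¹ - (y - x + I * c)⁻¹ := by
  have e : (x - y) ^ 2 + c ^ 2 = (y - x - I * c) * (y - x + I * c) := by
    linear_combination c ^ 2 * I_sq
  rw [Kk, e]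
  field_simp
  ring

theorem sqE (c x y : ℂ) (h : (x - y) ^ 2 + c ^ 2 ≠ 0) :
    y - x + I * c ≠ 0 ∧ y - x - I * c ≠ 0 := by
  have e : (x - y) ^ 2 + c ^ 2 = (y - x - I * c) * (y - x + I * c) := by
    linear_combination c ^ 2 * I_sq
  rw [e] at h
  exact ⟨right_ne_zero_of_mul h, left_ne_zero_of_mul h⟩

theorem sumK {n : ℕ} (c : ℂ) (lam : Fin (n+1) → ℂ) (hinj : Function.Injective lam) (y : ℂ)
    (h : ∀ j, (y - lam j) ^ 2 + c ^ 2 ≠ 0) :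
    ∑ j, Xi (Fin.elim0 : Fin 0 → ℂ) lam j * Kk c y (lam j) =
      I * (Vp c (Fin.elim0 : Fin 0 → ℂ) lam y - Vm c (Fin.elim0 : Fin 0 → ℂ) lam y) := by
  have hd : (1 : Polynomial ℂ).degree < ((n+1 : ℕ) : WithBot ℕ) := by
    rw [Polynomial.degree_one]; exact_mod_cast Nat.succ_pos n
  have e1 := lagE lam hinj 1 hd (y - I * c) (fun k hk => (sqE c y (lam k) (h k)).1 (by linear_combination hk))
  have e2 := lagE lam hinj 1 hd (y + I * c) (fun k hk => (sqE c y (lam k) (h k)).2 (by linear_combination hk))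
  have a1 : ∀ k, lam k - (y - I * c) = lam k - y + I * c := fun k => by ring
  have a2 : ∀ k, lam k - (y + I * c) = lam k - y - I * c := fun k => by ring
  simp only [a1, a2, Polynomial.eval_one, one_mul, mul_one] at e1 e2
  rw [VpE, VmE, ← e1, ← e2, ← Finset.sum_sub_distrib, Finset.mul_sum]
  refine Finset.sum_congr rfl fun k _ => ?_
  rw [XiE]
  have := KkE c y (lam k) (sqE c y (lam k) (h k)).1 (sqE c y (lam k) (h k)).2
  have h2 : Kk c y (lam k) = -I * ((lam k - y - I * c)⁻¹ - (lam k - y + I * c)⁻¹) := by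
    rw [← this]; linear_combination Kk c y (lam k) * I_sq
  rw [h2]
  ring

/-- Base case of the inductive proof (`N = 0`): the determinant formula for the form
factor of `Ψ^R(0)` between the vacuum and an `R`-particle Bethe state equals `(−i√c)^R R!`. -/
theorem HR_vacuum_value {R : ℕ} (c sc : ℂ) (hc : c ≠ 0) (hsc : sc ^ 2 = c) (hR : 1 ≤ R)
    (lam : Fin R → ℂ) (hinj : Function.Injective lam)
    (hpm : ∀ m j : Fin R, m ≠ j →
      lam m - lam j + I * c ≠ 0 ∧ lam m - lam j - I * c ≠ 0)
    (lp ls : ℂ)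
    (hp1 : ∀ j, (lp - lam j) ^ 2 + c ^ 2 ≠ 0)
    (hs1 : ∀ j, (ls - lam j) ^ 2 + c ^ 2 ≠ 0)
    (hV : ∀ j, Vp c (Fin.elim0 : Fin 0 → ℂ) lam (lam j) ≠
      Vm c (Fin.elim0 : Fin 0 → ℂ) lam (lam j))
    (hVp : Vp c (Fin.elim0 : Fin 0 → ℂ) lam lp ≠ Vm c (Fin.elim0 : Fin 0 → ℂ) lam lp)
    (hVs : Vp c (Fin.elim0 : Fin 0 → ℂ) lam ls ≠ Vm c (Fin.elim0 : Fin 0 → ℂ) lam ls) :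
    (I * sc) ^ R / (c ^ (2 * R - 1) * ((R - 1).factorial : ℂ)) *
        (∏ j, ∏ k, (lam j - lam k + I * c)) *
        (∏ j, (Vp c (Fin.elim0 : Fin 0 → ℂ) lam (lam j) -
          Vm c (Fin.elim0 : Fin 0 → ℂ) lam (lam j))) *
        (1 + Umat c (Fin.elim0 : Fin 0 → ℂ) lam lp ls).det /
        ((Vp c (Fin.elim0 : Fin 0 → ℂ) lam lp - Vm c (Fin.elim0 : Fin 0 → ℂ) lam lp) *
          (Vp c (Fin.elim0 : Fin 0 → ℂ) lam ls - Vm c (Fin.elim0 : Fin 0 → ℂ) lam ls)) =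
      (-(I * sc)) ^ R * (R.factorial : ℂ) := by
  obtain ⟨n, rfl⟩ : ∃ n, R = n + 1 := ⟨R - 1, by omega⟩
  have hIc : I * c ≠ 0 := mul_ne_zero I_ne_zero hc
  have hne : ∀ m j, lam m - lam j + I * c ≠ 0 := by
    intro m j
    by_cases h : m = j
    · subst h; simpa using hIc
    · exact (hpm m j h).1
  have hne' : ∀ m j, lam m - lam j - I * c ≠ 0 := fun m j h => hne j m (by linear_combination -h)
  set D : Fin (n+1) → ℂ := fun j => Vp c (Fin.elim0 : Fin 0 → ℂ) lam (lam j) -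
      Vm c (Fin.elim0 : Fin 0 → ℂ) lam (lam j) with hD
  have hD0 : ∀ j, D j ≠ 0 := fun j => sub_ne_zero.2 (hV j)
  have hdet : (∏ j, D j) * (1 + Umat c (Fin.elim0 : Fin 0 → ℂ) lam lp ls).det =
      (Matrix.diagonal D * (1 + Umat c (Fin.elim0 : Fin 0 → ℂ) lam lp ls)).det := by
    rw [Matrix.det_mul, Matrix.det_diagonal]
  have hM := detM lam hinj (I * c) hne (fun k => Xi (Fin.elim0 : Fin 0 → ℂ) lam k)
    (fun k => Vp c (Fin.elim0 : Fin 0 → ℂ) lam (lam k))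
    (fun k => Vm c (Fin.elim0 : Fin 0 → ℂ) lam (lam k))
    (fun k => Kk c ls (lam k)) (fun k => Kk c lp (lam k))
    (fun k => XiE lam k) (fun k => VpE c lam _) (fun k => VmE c lam _)
    (Matrix.diagonal D * (1 + Umat c (Fin.elim0 : Fin 0 → ℂ) lam lp ls)) (by
      intro j k
      rw [Matrix.diagonal_mul, Matrix.add_apply, Matrix.one_apply, mul_add,
        ← KkE c _ _ (hne k j) (hne' k j)]
      congr 1
      · simp [hD]
      · have h0 : Vp c (Fin.elim0 : Fin 0 → ℂ) lam (lam j) -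
          Vm c (Fin.elim0 : Fin 0 → ℂ) lam (lam j) ≠ 0 := hD0 j
        simp only [Umat, hD]
        field_simp)
  simp only [sumK c lam hinj ls hs1, sumK c lam hinj lp hp1] at hM
  have hP : ∏ k, Vp c (Fin.elim0 : Fin 0 → ℂ) lam (lam k) =
      (∏ j, ∏ k, (lam j - lam k + I * c))⁻¹ := by
    rw [Finset.prod_comm, ← Finset.prod_inv_distrib]
    exact Finset.prod_congr rfl fun k _ => VpE c lam _
  have hQ0 : ∏ j, ∏ k, (lam j - lam k + I * c) ≠ 0 :=
    Finset.prod_ne_zero_iff.2 fun j _ => Finset.prod_ne_zero_iff.2 fun k _ => hne j k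
  have hp0 := sub_ne_zero.2 hVp
  have hs0 := sub_ne_zero.2 hVs
  rw [mul_assoc _ (∏ j, D j), hdet, hM, hP]
  generalize Vp c (Fin.elim0 : Fin 0 → ℂ) lam lp - Vm c (Fin.elim0 : Fin 0 → ℂ) lam lp = Dp at *
  generalize Vp c (Fin.elim0 : Fin 0 → ℂ) lam ls - Vm c (Fin.elim0 : Fin 0 → ℂ) lam ls = Ds at *
  generalize ∏ j, ∏ k, (lam j - lam k + I * c) = Q at *
  have hf : (n.factorial : ℂ) ≠ 0 := by exact_mod_cast n.factorial_ne_zero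
  have e1 : 2 * (n + 1) - 1 = 2 * n + 1 := by omega
  rw [e1, Nat.add_sub_cancel, Nat.factorial_succ, neg_pow]
  have hI : I ^ (2 * n + 4) = (-1 : ℂ) ^ n := by
    rw [show 2 * n + 4 = 2 * (n + 2) by ring, pow_mul, I_sq, pow_add]; norm_num
  rw [div_mul_eq_mul_div, div_mul_eq_mul_div, div_div, div_eq_iff (by
    exact mul_ne_zero (mul_ne_zero (pow_ne_zero _ hc) hf) (mul_ne_zero hp0 hs0))]
  push_cast
  have hQ : Q * Q⁻¹ = 1 := mul_inv_cancel₀ hQ0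
  linear_combination (exp := 1) (-(I * sc) ^ (n+1) * Ds * Dp * (n.factorial : ℂ)^2 * (n+1) * c^(2*n+1)) * hI + (I * sc) ^ (n+1) * (-I * (I * Ds) * (I * Dp) * (n.factorial * (I*c)^n)^2 * ((n+1) * (I*c))) * hQ
end

section
/- Fix c ∈ ℂ with c ≠ 0, an integer R ≥ 1 and N ≥ 1, and set M = N+R. Under the nondegeneracy hypotheses making H_R well defined (for both the full sets and the reduced sets), the function μ_N ↦ (μ_N−λ_M)·H_R(μ_1,…,μ_N; λ_1,…,λ_M; λ_p,λ_s) extends continuously to μ_N = λ_M, and its value there equals ic·[∏_{j=1}^{N−1} f(μ_j,λ_M)·∏_{j=1}^{M−1} f(λ_M,λ_j) − ∏_{j=1}^{M−1} f(λ_j,λ_M)·∏_{j=1}^{N−1} f(λ_M,μ_j)]·H_R(μ_1,…,μ_{N−1}; λ_1,…,λ_{M−1}; λ_p,λ_s), where f(λ,μ) = (λ−μ+ic)/(λ−μ). -/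
open Complex Finset Matrix

open LL

namespace LLaux

noncomputable def Dd {N M : ℕ} (c : ℂ) (μ : Fin N → ℂ) (lam : Fin M → ℂ) (y : ℂ) : ℂ :=
  Vp c μ lam y - Vm c μ lam y

noncomputable def W {N M : ℕ} (c : ℂ) (μ : Fin N → ℂ) (lam : Fin M → ℂ) (lp ls : ℂ) :
    Matrix (Fin M) (Fin M) ℂ := fun j k =>
  Dd c μ lam (lam j) * (1 : Matrix (Fin M) (Fin M) ℂ) j k + I * Xi μ lam j *
    (Kk c (lam j) (lam k) - Kk c lp (lam k) * Kk c ls (lam j))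

lemma det_W {N M : ℕ} (c : ℂ) (μ : Fin N → ℂ) (lam : Fin M → ℂ) (lp ls : ℂ)
    (h : ∀ j, Vp c μ lam (lam j) ≠ Vm c μ lam (lam j)) :
    (∏ j, (Vp c μ lam (lam j) - Vm c μ lam (lam j))) * (1 + Umat c μ lam lp ls).det
      = (W c μ lam lp ls).det := by
  rw [← Matrix.det_mul_column]
  congr 1
  ext j k
  have hj := sub_ne_zero.2 (h j)
  simp only [Matrix.of_apply, Matrix.add_apply, W, Umat, Dd]
  field_simp

lemma HR_eq {N M : ℕ} (c sc : ℂ) (R : ℕ) (μ : Fin N → ℂ) (lam : Fin M → ℂ) (lp ls : ℂ)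
    (h : ∀ j, Vp c μ lam (lam j) ≠ Vm c μ lam (lam j)) :
    HR c sc R μ lam lp ls =
  (I * sc) ^ R / (c ^ (2 * R - 1) * ((R - 1).factorial : ℂ)) * (-1 : ℂ) ^ (N * (R - 1)) *
    (∏ j, ∏ k, (lam j - lam k + I * c)) *
    (∏ j, ∏ k, (lam j - μ k)⁻¹) *
    (W c μ lam lp ls).det / (Dd c μ lam lp * Dd c μ lam ls) := by
  rw [← det_W c μ lam lp ls h]
  simp only [HR, Dd]
  ring

lemma Dd_cont {n m : ℕ} (c : ℂ) (μ0 : Fin n → ℂ) (lam : Fin m → ℂ) (y : ℂ) :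
    Continuous fun x : ℂ => Dd c (Fin.snoc μ0 x : Fin (n+1) → ℂ) lam y := by
  simp only [Dd, Vp, Vm, Fin.prod_univ_castSucc (n := n), Fin.snoc_castSucc, Fin.snoc_last]
  simp only [div_eq_mul_inv]
  fun_prop

lemma Xi_cont {n m : ℕ} (μ0 : Fin n → ℂ) (lam : Fin m → ℂ) (j : Fin m) :
    Continuous fun x : ℂ => Xi (Fin.snoc μ0 x : Fin (n+1) → ℂ) lam j := by
  simp only [Xi, Fin.prod_univ_castSucc (n := n), Fin.snoc_castSucc, Fin.snoc_last]
  simp only [div_eq_mul_inv]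
  fun_prop

lemma W_cont {n m : ℕ} (c : ℂ) (μ0 : Fin n → ℂ) (lam : Fin m → ℂ) (lp ls : ℂ) :
    Continuous fun x : ℂ => (W c (Fin.snoc μ0 x : Fin (n+1) → ℂ) lam lp ls).det := by
  apply Continuous.matrix_det
  refine continuous_matrix fun j k => ?_
  simp only [W]
  have h1 := Dd_cont c μ0 lam (lam j)
  have h2 := Xi_cont μ0 lam j
  fun_prop

lemma Dd_at {n m : ℕ} (c : ℂ) (μ0 : Fin n → ℂ) (lam : Fin (m+1) → ℂ) (y : ℂ)
    (h1 : lam (Fin.last m) - y + I * c ≠ 0) (h2 : lam (Fin.last m) - y - I * c ≠ 0) :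
    Dd c (Fin.snoc μ0 (lam (Fin.last m)) : Fin (n+1) → ℂ) lam y =
      Dd c μ0 (fun i : Fin m => lam i.castSucc) y := by
  simp only [Dd, Vp, Vm, Fin.prod_univ_castSucc, Fin.snoc_castSucc, Fin.snoc_last]
  rw [mul_div_mul_right _ _ h1, mul_div_mul_right _ _ h2]

lemma prod_erase_ite {m : ℕ} (f : Fin m → ℂ) (j : Fin m) :
    ∏ k ∈ Finset.univ.erase j, f k = ∏ k, if k = j then 1 else f k := by
  rw [← Finset.mul_prod_erase Finset.univ _ (Finset.mem_univ j), if_pos rfl, one_mul]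
  refine Finset.prod_congr rfl fun k hk => ?_
  rw [if_neg (Finset.ne_of_mem_erase hk)]

lemma Xi_at {n m : ℕ} (μ0 : Fin n → ℂ) (lam : Fin (m+1) → ℂ) (hinj : Function.Injective lam)
    (j : Fin m) :
    Xi (Fin.snoc μ0 (lam (Fin.last m)) : Fin (n+1) → ℂ) lam j.castSucc =
      Xi μ0 (fun i : Fin m => lam i.castSucc) j := by
  have h : lam (Fin.last m) - lam j.castSucc ≠ 0 :=
    sub_ne_zero.2 (hinj.ne (Fin.castSucc_lt_last j).ne')
  simp only [Xi, prod_erase_ite, Fin.prod_univ_castSucc, Fin.snoc_castSucc, Fin.snoc_last,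
    Fin.castSucc_inj, if_neg (Fin.castSucc_lt_last j).ne']
  rw [mul_div_mul_right _ _ h]

lemma Xi_last {n m : ℕ} (μ0 : Fin n → ℂ) (lam : Fin (m+1) → ℂ) :
    Xi (Fin.snoc μ0 (lam (Fin.last m)) : Fin (n+1) → ℂ) lam (Fin.last m) = 0 := by
  simp [Xi, Fin.prod_univ_castSucc]

lemma W_at {n m : ℕ} (c : ℂ) (μ0 : Fin n → ℂ) (lam : Fin (m+1) → ℂ)
    (hinj : Function.Injective lam) (lp ls : ℂ)
    (hpm : ∀ j k, j ≠ k → lam j - lam k + I * c ≠ 0 ∧ lam j - lam k - I * c ≠ 0) :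
    (W c (Fin.snoc μ0 (lam (Fin.last m)) : Fin (n+1) → ℂ) lam lp ls).det =
      Dd c (Fin.snoc μ0 (lam (Fin.last m)) : Fin (n+1) → ℂ) lam (lam (Fin.last m)) *
      (W c μ0 (fun i : Fin m => lam i.castSucc) lp ls).det := by
  rw [Matrix.det_succ_row _ (Fin.last m), Finset.sum_eq_single (Fin.last m)]
  · rw [Even.neg_one_pow (by simp), one_mul]
    congr 1
    · simp [W, Xi_last]
    · congr 1
      ext j k
      have h := hpm _ _ (Fin.castSucc_lt_last j).ne'
      simp [W, Xi_at μ0 lam hinj, Dd_at c μ0 lam _ h.1 h.2, Matrix.one_apply]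
  · intro k _ hk
    simp [W, Xi_last, hk.symm]
  · simp

lemma alg (g C b4 er en P a1 a2 a3 a4 b1 b2 b3 w d : ℂ) (n1 : a1 ≠ 0) (n2 : a2 ≠ 0)
    (n3 : a3 ≠ 0) (n4 : a4 ≠ 0) (hn : en = 1 ∨ en = -1) (hr : er = 1 ∨ er = -1) :
    C * (b4 * er) * (P * a3 * (a4 * g)) * -(b3⁻¹ * a2⁻¹ * (en * a1)⁻¹) *
        ((b1 / a3 - b2 * en / (a4 * -(en * er))) * w) / d =
    g * (b1 / a1 * (a4 / (-(en * er) * a2)) - a3 / a2 * (b2 / (en * a1))) *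
      (C * b4 * P * b3⁻¹ * w / d) := by
  rw [div_eq_mul_inv _ d, div_eq_mul_inv _ d]
  generalize d⁻¹ = d'
  generalize b3⁻¹ = b3'
  rcases hn with rfl | rfl <;> rcases hr with rfl | rfl <;> field_simp <;> ring

end LLaux

set_option maxHeartbeats 1000000

open LLaux

/-- Recursive residue relation (property 4) for the determinant formula `H_R`:
`μ_N ↦ (μ_N−λ_M)·H_R(μ₁,…,μ_N; λ₁,…,λ_M)` extends continuously to `μ_N = λ_M`, with value
`ic·[∏ f(μ_j,λ_M)·∏ f(λ_M,λ_j) − ∏ f(λ_j,λ_M)·∏ f(λ_M,μ_j)]·H_R(μ₁,…,μ_{N−1}; λ₁,…,λ_{M−1})`. -/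
theorem HR_residue_relation {n m R : ℕ} (c sc : ℂ) (hc : c ≠ 0) (hsc : sc ^ 2 = c)
    (hR : 1 ≤ R) (hm : m + 1 = (n + 1) + R)
    (μ0 : Fin n → ℂ) (lam : Fin (m + 1) → ℂ) (hinj : Function.Injective lam)
    (lp ls : ℂ)
    (hmulam : ∀ k j, μ0 k ≠ lam j)
    (hpm : ∀ j k, j ≠ k → lam j - lam k + I * c ≠ 0 ∧ lam j - lam k - I * c ≠ 0)
    (hp1 : ∀ j, (lp - lam j) ^ 2 + c ^ 2 ≠ 0)
    (hs1 : ∀ j, (ls - lam j) ^ 2 + c ^ 2 ≠ 0)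
    (hVred : ∀ j : Fin m, Vp c μ0 (fun i : Fin m => lam i.castSucc) (lam j.castSucc) ≠
      Vm c μ0 (fun i : Fin m => lam i.castSucc) (lam j.castSucc))
    (hVredp : Vp c μ0 (fun i : Fin m => lam i.castSucc) lp ≠
      Vm c μ0 (fun i : Fin m => lam i.castSucc) lp)
    (hVreds : Vp c μ0 (fun i : Fin m => lam i.castSucc) ls ≠
      Vm c μ0 (fun i : Fin m => lam i.castSucc) ls) :
    Filter.Tendsto
      (fun x : ℂ => (x - lam (Fin.last m)) * HR c sc R (Fin.snoc μ0 x) lam lp ls)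
      (nhdsWithin (lam (Fin.last m))
        {x : ℂ |
          (∀ j, x ≠ lam j) ∧
          (∀ j, Vp c (Fin.snoc μ0 x) lam (lam j) ≠ Vm c (Fin.snoc μ0 x) lam (lam j)) ∧
          Vp c (Fin.snoc μ0 x) lam lp ≠ Vm c (Fin.snoc μ0 x) lam lp ∧
          Vp c (Fin.snoc μ0 x) lam ls ≠ Vm c (Fin.snoc μ0 x) lam ls})
      (nhds (I * c *
        ((∏ j : Fin n, fsc c (μ0 j) (lam (Fin.last m))) *
            (∏ j : Fin m, fsc c (lam (Fin.last m)) (lam j.castSucc)) -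
          (∏ j : Fin m, fsc c (lam j.castSucc) (lam (Fin.last m))) *
            (∏ j : Fin n, fsc c (lam (Fin.last m)) (μ0 j))) *
        HR c sc R μ0 (fun i : Fin m => lam i.castSucc) lp ls)) := by
  have hIc : I * c ≠ 0 := mul_ne_zero I_ne_zero hc
  set L := lam (Fin.last m) with hL
  have hfac : ∀ y : ℂ, (∀ j, (y - lam j) ^ 2 + c ^ 2 ≠ 0) →
      L - y + I * c ≠ 0 ∧ L - y - I * c ≠ 0 := by
    intro y hy
    have h := hy (Fin.last m)
    have e : (y - L) ^ 2 + c ^ 2 = (L - y + I * c) * (L - y - I * c) := by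
      linear_combination (c ^ 2) * I_sq
    rw [← hL, e] at h
    exact ⟨left_ne_zero_of_mul h, right_ne_zero_of_mul h⟩
  set G : ℂ → ℂ := fun x =>
    (I * sc) ^ R / (c ^ (2 * R - 1) * ((R - 1).factorial : ℂ)) * (-1 : ℂ) ^ ((n + 1) * (R - 1)) *
    (∏ j, ∏ k, (lam j - lam k + I * c)) *
    (-((∏ j : Fin m, ((∏ k, (lam j.castSucc - μ0 k)⁻¹) * (lam j.castSucc - x)⁻¹)) *
      ∏ k, (L - μ0 k)⁻¹)) *
    (W c (Fin.snoc μ0 x : Fin (n+1) → ℂ) lam lp ls).det /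
      (Dd c (Fin.snoc μ0 x : Fin (n+1) → ℂ) lam lp * Dd c (Fin.snoc μ0 x : Fin (n+1) → ℂ) lam ls)
    with hG
  have hDp := Dd_at c μ0 lam lp (hfac lp hp1).1 (hfac lp hp1).2
  have hDs := Dd_at c μ0 lam ls (hfac ls hs1).1 (hfac ls hs1).2
  rw [← hL] at hDp hDs
  have hcont : ContinuousAt G L := by
    have hW := (W_cont c μ0 lam lp ls).continuousAt (x := L)
    have h1 := (Dd_cont c μ0 lam lp).continuousAt (x := L)
    have h2 := (Dd_cont c μ0 lam ls).continuousAt (x := L)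
    refine ContinuousAt.div ?_ (h1.mul h2) ?_
    · refine ContinuousAt.mul (ContinuousAt.mul continuousAt_const ?_) hW
      refine (ContinuousAt.mul ?_ continuousAt_const).neg
      refine tendsto_finsetProd _ fun j _ => ?_
      refine ContinuousAt.mul continuousAt_const (ContinuousAt.inv₀ (by fun_prop) ?_)
      exact sub_ne_zero.2 (hinj.ne (Fin.castSucc_lt_last j).ne)
    · rw [hDp, hDs]
      exact mul_ne_zero (sub_ne_zero.2 hVredp) (sub_ne_zero.2 hVreds)
  have hval : G L = I * c *
        ((∏ j : Fin n, fsc c (μ0 j) L) *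
            (∏ j : Fin m, fsc c L (lam j.castSucc)) -
          (∏ j : Fin m, fsc c (lam j.castSucc) L) *
            (∏ j : Fin n, fsc c L (μ0 j))) *
        HR c sc R μ0 (fun i : Fin m => lam i.castSucc) lp ls := by
    rw [HR_eq c sc R μ0 _ lp ls hVred, hG]
    simp only
    rw [hDp, hDs, hL, W_at c μ0 lam hinj lp ls hpm, ← hL]
    have hDL : Dd c (Fin.snoc μ0 L : Fin (n+1) → ℂ) lam L =
        (∏ k, (μ0 k - L + I * c)) / (∏ j : Fin m, (lam j.castSucc - L + I * c)) -
        (∏ k, (L - μ0 k + I * c)) * (-1) ^ n /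
          ((∏ j : Fin m, (L - lam j.castSucc + I * c)) * (-1) ^ m) := by
      rw [hL, Dd_at c μ0 lam _ (by simpa using hIc) (by simpa using hIc), ← hL]
      simp only [Dd, Vp, Vm]
      congr 2
      · rw [mul_comm, ← Fin.prod_const, ← Finset.prod_mul_distrib]
        exact Finset.prod_congr rfl fun _ _ => by ring
      · rw [mul_comm, ← Fin.prod_const, ← Finset.prod_mul_distrib]
        exact Finset.prod_congr rfl fun _ _ => by ring
    rw [hDL]
    have e1 : (∏ j, ∏ k, (lam j - lam k + I * c)) =
        (∏ j : Fin m, ∏ k : Fin m, (lam j.castSucc - lam k.castSucc + I * c)) *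
        (∏ j : Fin m, (lam j.castSucc - L + I * c)) *
        ((∏ j : Fin m, (L - lam j.castSucc + I * c)) * (I * c)) := by
      simp only [Fin.prod_univ_castSucc (n := m), Finset.prod_mul_distrib, ← hL, sub_self, zero_add]
    rw [e1]
    have s1 : (∏ k, (L - μ0 k)) = (-1) ^ n * ∏ k, (μ0 k - L) := by
      rw [← Fin.prod_const, ← Finset.prod_mul_distrib]
      exact Finset.prod_congr rfl fun _ _ => by ring
    have s2 : (∏ k : Fin m, (L - lam k.castSucc)) = (-1) ^ m * ∏ k : Fin m, (lam k.castSucc - L) := by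
      rw [← Fin.prod_const, ← Finset.prod_mul_distrib]
      exact Finset.prod_congr rfl fun _ _ => by ring
    simp only [fsc, Finset.prod_div_distrib, Finset.prod_mul_distrib, Finset.prod_inv_distrib]
    rw [s1, s2]
    have n1 : (∏ k, (μ0 k - L)) ≠ 0 :=
      Finset.prod_ne_zero_iff.2 fun k _ => sub_ne_zero.2 (hmulam k _)
    have n2 : (∏ k : Fin m, (lam k.castSucc - L)) ≠ 0 :=
      Finset.prod_ne_zero_iff.2 fun k _ => sub_ne_zero.2 (hinj.ne (Fin.castSucc_lt_last k).ne)
    have n3 : (∏ k : Fin m, (lam k.castSucc - L + I * c)) ≠ 0 :=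
      Finset.prod_ne_zero_iff.2 fun k _ => (hpm _ _ (Fin.castSucc_lt_last k).ne).1
    have n4 : (∏ k : Fin m, (L - lam k.castSucc + I * c)) ≠ 0 :=
      Finset.prod_ne_zero_iff.2 fun k _ => (hpm _ _ (Fin.castSucc_lt_last k).ne').1
    obtain ⟨r, rfl⟩ : ∃ r, R = r + 1 := ⟨R - 1, by omega⟩
    obtain rfl : m = n + (r + 1) := by omega
    have q1 : (-1 : ℂ) ^ ((n + 1) * (r + 1 - 1)) = (-1) ^ (n * (r + 1 - 1)) * (-1) ^ r := by
      rw [← pow_add]; congr 1; simp; ring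
    have q2 : (-1 : ℂ) ^ (n + (r + 1)) = -((-1) ^ n * (-1) ^ r) := by
      rw [pow_add, pow_succ]; ring
    rw [q1, q2]
    exact alg _ _ _ _ _ _ _ _ _ _ _ _ _ _ _ n1 n2 n3 n4 (neg_one_pow_eq_or ℂ n)
      (neg_one_pow_eq_or ℂ r)
  rw [← hval]
  refine (hcont.tendsto.mono_left nhdsWithin_le_nhds).congr' ?_
  filter_upwards [self_mem_nhdsWithin] with x hx
  obtain ⟨hx1, hx2, -, -⟩ := hx
  rw [HR_eq c sc R _ lam lp ls hx2, hG]
  have hxL : x - L ≠ 0 := sub_ne_zero.2 (hx1 _)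
  have e2 : (∏ j, ∏ k, (lam j - (Fin.snoc μ0 x : Fin (n+1) → ℂ) k)⁻¹) =
      ((∏ j : Fin m, ((∏ k, (lam j.castSucc - μ0 k)⁻¹) * (lam j.castSucc - x)⁻¹)) *
      ∏ k, (L - μ0 k)⁻¹) * (-(x - L)⁻¹) := by
    simp only [Fin.prod_univ_castSucc (n := m), Fin.prod_univ_castSucc (n := n),
      Fin.snoc_castSucc, Fin.snoc_last, ← hL]
    rw [← inv_neg, neg_sub]
    ring
  rw [e2]
  simp only
  field_simp
end

section
/- Fix c ∈ ℂ with c ≠ 0, an integer R ≥ 1 and N ≥ 0, and set M = N+R. Under the nondegeneracy hypotheses making H_R well defined, H_R is a symmetric function of the sets of rapidities: for any permutation σ of {1,…,N} and any permutation τ of {1,…,M}, H_R(μ_{σ(1)},…,μ_{σ(N)}; λ_{τ(1)},…,λ_{τ(M)}; λ_p, λ_s) = H_R(μ_1,…,μ_N; λ_1,…,λ_M; λ_p, λ_s). -/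
open Complex Finset Matrix

open LL

theorem Vp_perm {N M : ℕ} (c : ℂ) (μ : Fin N → ℂ) (lam : Fin M → ℂ) (x : ℂ)
    (σ : Equiv.Perm (Fin N)) (τ : Equiv.Perm (Fin M)) :
    Vp c (μ ∘ σ) (lam ∘ τ) x = Vp c μ lam x := by
  unfold Vp
  congr 1
  · exact Equiv.prod_comp σ (fun m => μ m - x + I * c)
  · exact Equiv.prod_comp τ (fun m => lam m - x + I * c)

theorem Vm_perm {N M : ℕ} (c : ℂ) (μ : Fin N → ℂ) (lam : Fin M → ℂ) (x : ℂ)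
    (σ : Equiv.Perm (Fin N)) (τ : Equiv.Perm (Fin M)) :
    Vm c (μ ∘ σ) (lam ∘ τ) x = Vm c μ lam x := by
  unfold Vm
  congr 1
  · exact Equiv.prod_comp σ (fun m => μ m - x - I * c)
  · exact Equiv.prod_comp τ (fun m => lam m - x - I * c)

theorem Xi_perm {N M : ℕ} (μ : Fin N → ℂ) (lam : Fin M → ℂ) (j : Fin M)
    (σ : Equiv.Perm (Fin N)) (τ : Equiv.Perm (Fin M)) :
    Xi (μ ∘ σ) (lam ∘ τ) j = Xi μ lam (τ j) := by
  unfold Xi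
  congr 1
  · exact Equiv.prod_comp σ (fun m => μ m - lam (τ j))
  · refine Finset.prod_equiv τ ?_ ?_
    · intro i
      simp
    · intro i _
      rfl

theorem Umat_perm {N M : ℕ} (c : ℂ) (μ : Fin N → ℂ) (lam : Fin M → ℂ) (lp ls : ℂ)
    (σ : Equiv.Perm (Fin N)) (τ : Equiv.Perm (Fin M)) :
    1 + Umat c (μ ∘ σ) (lam ∘ τ) lp ls = (1 + Umat c μ lam lp ls).submatrix τ τ := by
  ext j k
  simp [Umat, Vp_perm, Vm_perm, Xi_perm, Matrix.one_apply]

/-- Permutation symmetry of the determinant formula `H_R`: it is a symmetric function of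
the rapidities `μ₁,…,μ_N` and of the rapidities `λ₁,…,λ_M`. -/
theorem HR_permutation_symmetric {N M R : ℕ} (c sc : ℂ) (hc : c ≠ 0) (hsc : sc ^ 2 = c)
    (hR : 1 ≤ R) (hM : M = N + R)
    (μ : Fin N → ℂ) (lam : Fin M → ℂ) (hinj : Function.Injective lam)
    (hmulam : ∀ k j, μ k ≠ lam j)
    (hpm : ∀ m j, lam m - lam j + I * c ≠ 0 ∧ lam m - lam j - I * c ≠ 0)
    (lp ls : ℂ)
    (hp1 : ∀ j, (lp - lam j) ^ 2 + c ^ 2 ≠ 0)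
    (hs1 : ∀ j, (ls - lam j) ^ 2 + c ^ 2 ≠ 0)
    (hV : ∀ j, Vp c μ lam (lam j) ≠ Vm c μ lam (lam j))
    (hVp : Vp c μ lam lp ≠ Vm c μ lam lp)
    (hVs : Vp c μ lam ls ≠ Vm c μ lam ls)
    (σ : Equiv.Perm (Fin N)) (τ : Equiv.Perm (Fin M)) :
    HR c sc R (μ ∘ σ) (lam ∘ τ) lp ls = HR c sc R μ lam lp ls := by
  have h1 : ∏ j, ∏ k, ((lam ∘ τ) j - (lam ∘ τ) k + I * c)
      = ∏ j, ∏ k, (lam j - lam k + I * c) := by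
    rw [← Equiv.prod_comp τ (fun j => ∏ k, (lam j - lam k + I * c))]
    refine Finset.prod_congr rfl fun j _ => ?_
    exact Equiv.prod_comp τ (fun k => lam (τ j) - lam k + I * c)
  have h2 : ∏ j, ∏ k, ((lam ∘ τ) j - (μ ∘ σ) k)⁻¹ = ∏ j, ∏ k, (lam j - μ k)⁻¹ := by
    rw [← Equiv.prod_comp τ (fun j => ∏ k, (lam j - μ k)⁻¹)]
    refine Finset.prod_congr rfl fun j _ => ?_
    exact Equiv.prod_comp σ (fun k => (lam (τ j) - μ k)⁻¹)
  have h3 : ∏ j, (Vp c μ lam ((lam ∘ τ) j) - Vm c μ lam ((lam ∘ τ) j))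
      = ∏ j, (Vp c μ lam (lam j) - Vm c μ lam (lam j)) :=
    Equiv.prod_comp τ (fun j => Vp c μ lam (lam j) - Vm c μ lam (lam j))
  unfold HR
  rw [Umat_perm, Matrix.det_submatrix_equiv_self]
  simp only [Vp_perm, Vm_perm]
  rw [h1, h2, h3]
end

section
/- Fix c ∈ ℂ with c ≠ 0, an integer R ≥ 1 and N ≥ 1, and set M = N+R. Fix λ_1,…,λ_M pairwise distinct, μ_1,…,μ_{N−1}, λ_p, λ_s satisfying the nondegeneracy hypotheses making H_R well defined, and an index m = N. Then H_R(μ_1,…,μ_{N−1},μ_N; λ_1,…,λ_M; λ_p,λ_s) → 0 as μ_N → ∞ (the limit being along complex μ_N with |μ_N| → ∞ through values for which the expression is defined). -/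
open Complex Finset Matrix

open LL

theorem pf_aux {N M : ℕ} (hNM : N < M) (μ : Fin N → ℂ) (lam : Fin M → ℂ)
    (hinj : Function.Injective lam) (y : ℂ) (hy : ∀ k, lam k - y ≠ 0) :
    (∏ m, (μ m - y)) / ∏ m, (lam m - y) = ∑ k, Xi μ lam k * (lam k - y)⁻¹ := by
  classical
  have hinj' : Set.InjOn (fun k => - lam k) (Finset.univ : Finset (Fin M)) := by
    intro a _ b _ h
    exact hinj (neg_injective h)
  let P : Polynomial ℂ := ∏ m, (Polynomial.X + Polynomial.C (μ m))
  have hev : ∀ x, P.eval x = ∏ m, (x + μ m) := by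
    intro x
    simp [P, Polynomial.eval_prod]
  have hdeg : P.degree < (Finset.univ : Finset (Fin M)).card := by
    have : P.degree = (N : WithBot ℕ) := by
      simp [P, Polynomial.degree_prod, Polynomial.degree_X_add_C]
    rw [this]
    simpa using hNM
  have h1 := Lagrange.eq_interpolate (f := P) hinj' hdeg
  have h2 := congrArg (Polynomial.eval (-y)) h1
  rw [Lagrange.eval_interpolate_not_at_node] at h2
  · rw [hev, Lagrange.eval_nodal] at h2
    have hne : ∏ m, (lam m - y) ≠ 0 := Finset.prod_ne_zero_iff.mpr fun k _ => hy k
    rw [div_eq_iff hne, mul_comm]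
    have e1 : ∏ m, (μ m - y) = ∏ m, (-y + μ m) := by
      refine Finset.prod_congr rfl fun m _ => by ring
    have e2 : ∏ m, (lam m - y) = ∏ m, (-y - -lam m) := by
      refine Finset.prod_congr rfl fun m _ => by ring
    rw [e1, e2, h2]
    congr 1
    refine Finset.sum_congr rfl fun k _ => ?_
    rw [hev, Lagrange.nodalWeight, Xi, Finset.prod_inv_distrib]
    have e3 : ∏ m, (μ m - lam k) = ∏ m, (-lam k + μ m) := by
      refine Finset.prod_congr rfl fun m _ => by ring
    have e4 : ∏ m ∈ Finset.univ.erase k, (lam m - lam k)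
        = ∏ m ∈ Finset.univ.erase k, (-lam k - -lam m) := by
      refine Finset.prod_congr rfl fun m _ => by ring
    have e5 : lam k - y = -y - -lam k := by ring
    rw [e3, e4, e5]
    ring
  · intro k _ h
    apply hy k
    have : y = lam k := neg_injective h
    rw [this]; ring

theorem sumK_aux {N M : ℕ} (hNM : N < M) (c : ℂ) (μ : Fin N → ℂ) (lam : Fin M → ℂ)
    (hinj : Function.Injective lam) (y : ℂ) (hy : ∀ k, (y - lam k) ^ 2 + c ^ 2 ≠ 0) :
    ∑ k, Xi μ lam k * Kk c y (lam k) = I * (Vp c μ lam y - Vm c μ lam y) := by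
  have hfac : ∀ k, (lam k - (y - I * c)) * (lam k - (y + I * c)) = (y - lam k) ^ 2 + c ^ 2 := by
    intro k
    linear_combination (-c ^ 2) * I_sq
  have ha : ∀ k, lam k - (y - I * c) ≠ 0 := fun k h => hy k (by rw [← hfac, h, zero_mul])
  have hb : ∀ k, lam k - (y + I * c) ≠ 0 := fun k h => hy k (by rw [← hfac, h, mul_zero])
  have h1 := pf_aux hNM μ lam hinj (y - I * c) ha
  have h2 := pf_aux hNM μ lam hinj (y + I * c) hb
  have hp : Vp c μ lam y = ∑ k, Xi μ lam k * (lam k - (y - I * c))⁻¹ := by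
    rw [← h1, Vp]
    congr 1 <;> refine Finset.prod_congr rfl fun m _ => by ring
  have hm : Vm c μ lam y = ∑ k, Xi μ lam k * (lam k - (y + I * c))⁻¹ := by
    rw [← h2, Vm]
    congr 1 <;> refine Finset.prod_congr rfl fun m _ => by ring
  rw [hp, hm, ← Finset.sum_sub_distrib, Finset.mul_sum]
  refine Finset.sum_congr rfl fun k _ => ?_
  have : (lam k - (y - I * c))⁻¹ - (lam k - (y + I * c))⁻¹ = -I * Kk c y (lam k) := by
    rw [Kk, ← hfac, inv_sub_inv (ha k) (hb k)]
    have := ha k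
    have := hb k
    field_simp
    ring
  rw [← mul_sub, this]
  linear_combination ((Xi μ lam k) * Kk c y (lam k)) * I_sq

theorem det_aux {n : Type*} [Fintype n] [DecidableEq n] (S : Matrix n n ℂ) (u v X : n → ℂ) (z : n)
    (hrow : ∀ k, ∑ j, S j k = 0) (hcol : ∀ j, ∑ k, S j k * X k = 0) :
    X z * (Matrix.of fun j k => S j k - u j * v k).det =
      -((∑ j, u j) * (∑ k, X k * v k)) *
        (Matrix.of fun j k => if j = z then (if k = z then 1 else v k) else
          if k = z then - u j else S j k - u j * v k).det := by
  set A : Matrix n n ℂ := Matrix.of fun j k => S j k - u j * v k with hA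
  have h1 : X z * A.det = (∑ k, X k * v k) * (A.updateCol z (fun j => - u j)).det := by
    rw [← Matrix.det_updateCol_smul, ← smul_eq_mul, ← Matrix.det_updateCol_sum]
    congr 2
    funext j
    have : ∑ k, X k * A j k = ∑ k, S j k * X k - u j * ∑ k, X k * v k := by
      rw [Finset.mul_sum, ← Finset.sum_sub_distrib]
      refine Finset.sum_congr rfl fun k _ => ?_
      simp only [hA, Matrix.of_apply]; ring
    simp only [smul_eq_mul, Pi.smul_apply]
    rw [this, hcol]; ring
  have h2 : (A.updateCol z (fun j => - u j)).det = (-∑ j, u j) *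
      ((A.updateCol z (fun j => - u j)).updateRow z (fun k => if k = z then 1 else v k)).det := by
    have h3 := Matrix.det_updateRow_sum (A.updateCol z (fun j => - u j)) z (fun _ => 1)
    rw [one_smul] at h3
    rw [← h3, ← Matrix.det_updateRow_smul]
    congr 2
    funext k
    rw [Finset.sum_apply]
    by_cases hk : k = z
    · subst hk; simp
    · simp [hk, hA, hrow, Finset.sum_mul]
  rw [h1, h2]
  have : ((A.updateCol z (fun j => - u j)).updateRow z (fun k => if k = z then 1 else v k)) =
    (Matrix.of fun j k => if j = z then (if k = z then 1 else v k) else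
          if k = z then - u j else S j k - u j * v k) := by
    ext j k
    by_cases hj : j = z
    · subst hj; simp
    · by_cases hk : k = z
      · subst hk; simp [hj]
      · simp [hj, hk, hA]
  rw [this]; ring

/-- The reduced matrix. -/
noncomputable def Bm {N M : ℕ} (c : ℂ) (μ : Fin N → ℂ) (lam : Fin M → ℂ) (lp ls : ℂ) (z : Fin M) :
    Matrix (Fin M) (Fin M) ℂ := Matrix.of fun j k =>
  if j = z then (if k = z then 1 else Kk c lp (lam k)) else
    if k = z then -(I * Xi μ lam j * Kk c ls (lam j)) else
      ((if j = k then Vp c μ lam (lam j) - Vm c μ lam (lam j) else 0)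
        + I * Xi μ lam j * Kk c (lam j) (lam k)) - I * Xi μ lam j * Kk c ls (lam j) * Kk c lp (lam k)

theorem main_det {N M : ℕ} (hNM : N < M) (c : ℂ) (μ : Fin N → ℂ) (lam : Fin M → ℂ)
    (hinj : Function.Injective lam) (lp ls : ℂ) (z : Fin M)
    (hl : ∀ j k, (lam j - lam k) ^ 2 + c ^ 2 ≠ 0)
    (hp1 : ∀ j, (lp - lam j) ^ 2 + c ^ 2 ≠ 0)
    (hs1 : ∀ j, (ls - lam j) ^ 2 + c ^ 2 ≠ 0)
    (hV : ∀ j, Vp c μ lam (lam j) ≠ Vm c μ lam (lam j)) :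
    Xi μ lam z * ((∏ j, (Vp c μ lam (lam j) - Vm c μ lam (lam j))) *
      (1 + Umat c μ lam lp ls).det) =
    I * ((Vp c μ lam lp - Vm c μ lam lp) * (Vp c μ lam ls - Vm c μ lam ls)) *
      (Bm c μ lam lp ls z).det := by
  have hK := sumK_aux hNM c μ lam hinj
  have key := det_aux (Matrix.of fun j k : Fin M =>
      (if j = k then Vp c μ lam (lam j) - Vm c μ lam (lam j) else 0)
        + I * Xi μ lam j * Kk c (lam j) (lam k))
      (fun j => I * Xi μ lam j * Kk c ls (lam j)) (fun k => Kk c lp (lam k)) (Xi μ lam) z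
      (by
        intro k
        simp only [Matrix.of_apply, Finset.sum_add_distrib, Finset.sum_ite_eq', Finset.mem_univ,
          if_true]
        have : ∑ j, I * Xi μ lam j * Kk c (lam j) (lam k)
            = I * ∑ j, Xi μ lam j * Kk c (lam k) (lam j) := by
          rw [Finset.mul_sum]
          refine Finset.sum_congr rfl fun j _ => ?_
          rw [Kk_symm, mul_assoc]
        rw [this, hK _ (hl k)]
        linear_combination (Vp c μ lam (lam k) - Vm c μ lam (lam k)) * I_sq)
      (by
        intro j
        simp only [Matrix.of_apply, add_mul, Finset.sum_add_distrib, ite_mul, zero_mul,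
          Finset.sum_ite_eq, Finset.mem_univ, if_true]
        have : ∑ k, I * Xi μ lam j * Kk c (lam j) (lam k) * Xi μ lam k
            = I * Xi μ lam j * ∑ k, Xi μ lam k * Kk c (lam j) (lam k) := by
          rw [Finset.mul_sum]
          refine Finset.sum_congr rfl fun k _ => by ring
        rw [this, hK _ (hl j)]
        linear_combination (Vp c μ lam (lam j) - Vm c μ lam (lam j)) * Xi μ lam j * I_sq)
  have hs : ∑ j, I * Xi μ lam j * Kk c ls (lam j) = I * (I * (Vp c μ lam ls - Vm c μ lam ls)) := by
    rw [← hK _ hs1, Finset.mul_sum]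
    refine Finset.sum_congr rfl fun k _ => by ring
  rw [hs, hK _ hp1] at key
  rw [← Matrix.det_mul_column]
  refine Eq.trans (congrArg _ (congrArg Matrix.det ?_)) (key.trans ?_)
  · ext j k
    have := sub_ne_zero.mpr (hV j)
    simp only [Matrix.of_apply, Matrix.add_apply, Matrix.one_apply, Umat]
    split_ifs <;> field_simp <;> ring
  · have : ∀ d : ℂ, -(I * (I * (Vp c μ lam ls - Vm c μ lam ls)) * (I * (Vp c μ lam lp - Vm c μ lam lp))) * d = I * ((Vp c μ lam lp - Vm c μ lam lp) * (Vp c μ lam ls - Vm c μ lam ls)) * d := by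
      intro d
      linear_combination (-I * (Vp c μ lam lp - Vm c μ lam lp) * (Vp c μ lam ls - Vm c μ lam ls) * d) * I_sq
    rw [this]
    rfl

/-- Decay at infinity (property 2, case `h = 0`) of the determinant formula `H_R`:
`H_R(μ₁,…,μ_N; λ; λ_p,λ_s) → 0` as `|μ_N| → ∞` through values for which the
expression is defined. -/
theorem HR_tendsto_zero_at_infty {n R : ℕ} (c sc : ℂ) (hc : c ≠ 0) (hsc : sc ^ 2 = c)
    (hR : 1 ≤ R)
    (μ0 : Fin n → ℂ) (lam : Fin ((n + 1) + R) → ℂ) (hinj : Function.Injective lam)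
    (lp ls : ℂ)
    (hmulam : ∀ k j, μ0 k ≠ lam j)
    (hpm : ∀ j k, lam j - lam k + I * c ≠ 0 ∧ lam j - lam k - I * c ≠ 0)
    (hp1 : ∀ j, (lp - lam j) ^ 2 + c ^ 2 ≠ 0)
    (hs1 : ∀ j, (ls - lam j) ^ 2 + c ^ 2 ≠ 0) :
    Filter.Tendsto (fun x : ℂ => HR c sc R (Fin.snoc μ0 x) lam lp ls)
      (Bornology.cobounded ℂ ⊓ Filter.principal
        {x : ℂ |
          (∀ j, x ≠ lam j) ∧
          (∀ j, Vp c (Fin.snoc μ0 x) lam (lam j) ≠ Vm c (Fin.snoc μ0 x) lam (lam j)) ∧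
          Vp c (Fin.snoc μ0 x) lam lp ≠ Vm c (Fin.snoc μ0 x) lam lp ∧
          Vp c (Fin.snoc μ0 x) lam ls ≠ Vm c (Fin.snoc μ0 x) lam ls})
      (nhds 0) := by
  classical
  have hM : n + 1 < n + 1 + R := by omega
  have hl : ∀ j k, (lam j - lam k) ^ 2 + c ^ 2 ≠ 0 := by
    intro j k
    have := mul_ne_zero (hpm j k).1 (hpm j k).2
    intro h
    apply this
    linear_combination h - c ^ 2 * I_sq
  let z : Fin (n + 1 + R) := ⟨0, by omega⟩
  let X0 : Fin (n + 1 + R) → ℂ := fun j => Xi μ0 lam j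
  have hXi : ∀ x j, Xi (Fin.snoc μ0 x : Fin (n + 1) → ℂ) lam j = X0 j * (x - lam j) := by
    intro x j
    simp only [X0, Xi, Fin.prod_univ_castSucc, Fin.snoc_castSucc, Fin.snoc_last]
    ring
  have hVp : ∀ x y, Vp c (Fin.snoc μ0 x : Fin (n + 1) → ℂ) lam y
      = Vp c μ0 lam y * (x - y + I * c) := by
    intro x y
    simp only [Vp, Fin.prod_univ_castSucc (n := n), Fin.snoc_castSucc, Fin.snoc_last]
    ring
  have hVm : ∀ x y, Vm c (Fin.snoc μ0 x : Fin (n + 1) → ℂ) lam y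
      = Vm c μ0 lam y * (x - y - I * c) := by
    intro x y
    simp only [Vm, Fin.prod_univ_castSucc (n := n), Fin.snoc_castSucc, Fin.snoc_last]
    ring
  have hX0 : ∀ j, X0 j ≠ 0 := by
    intro j
    refine div_ne_zero (Finset.prod_ne_zero_iff.mpr fun m _ => sub_ne_zero.mpr (hmulam m j))
      (Finset.prod_ne_zero_iff.mpr fun m hm => sub_ne_zero.mpr fun h => ?_)
    exact (Finset.mem_erase.mp hm).1 (hinj h)
  let C0 : ℂ := (I * sc) ^ R / (c ^ (2 * R - 1) * ((R - 1).factorial : ℂ)) *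
    (-1 : ℂ) ^ ((n + 1) * (R - 1)) *
    (∏ j, ∏ k, (lam j - lam k + I * c)) * (∏ j, ∏ k, (lam j - μ0 k)⁻¹) * I * (X0 z)⁻¹
  -- scaled reduced matrix as a function of t = (lam j - x)⁻¹
  let W : (Fin (n + 1 + R) → ℂ) → Matrix (Fin (n + 1 + R)) (Fin (n + 1 + R)) ℂ := fun t =>
    Matrix.of fun j k =>
    if j = z then t j * (if k = z then 1 else Kk c lp (lam k)) else
    if k = z then (I * X0 j * Kk c ls (lam j)) else
      ((if j = k then Vp c μ0 lam (lam j) * (-1 + I * c * t j)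
          - Vm c μ0 lam (lam j) * (-1 - I * c * t j) else 0)
        - I * X0 j * Kk c (lam j) (lam k)) + I * X0 j * Kk c ls (lam j) * Kk c lp (lam k)
  have hWc : Continuous fun t => (W t).det := by
    apply Continuous.matrix_det
    refine continuous_matrix fun j k => ?_
    simp only [W, Matrix.of_apply]
    split_ifs <;> fun_prop
  have ht : Filter.Tendsto (fun x : ℂ => fun j => (lam j - x)⁻¹) (Bornology.cobounded ℂ)
      (nhds (fun _ => 0)) := by
    rw [tendsto_pi_nhds]
    intro j
    exact Filter.tendsto_inv₀_cobounded.comp (by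
      rw [← tendsto_norm_atTop_iff_cobounded]
      refine Filter.tendsto_atTop_mono (fun x => ?_) (Filter.tendsto_atTop_add_const_right _ (-‖lam j‖) tendsto_norm_cobounded_atTop)
      have := norm_sub_norm_le x (lam j)
      rw [norm_sub_rev] at this
      linarith)
  have hlim : Filter.Tendsto (fun x : ℂ => C0 * (-(lam z - x)⁻¹) * (W (fun j => (lam j - x)⁻¹)).det)
      (Bornology.cobounded ℂ) (nhds 0) := by
    have h1 := (hWc.tendsto _).comp ht
    have h2 := ((tendsto_pi_nhds.mp ht z).neg.const_mul C0).mul h1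
    simpa using h2
  refine (hlim.mono_left inf_le_left).congr' ?_
  refine Filter.Eventually.filter_mono inf_le_right ?_
  rw [Filter.eventually_principal]
  rintro x ⟨hx, hV, hVlp, hVls⟩
  have hx' : ∀ j, lam j - x ≠ 0 := fun j => sub_ne_zero.mpr (hx j).symm
  have key := main_det hM c (Fin.snoc μ0 x) lam hinj lp ls z hl hp1 hs1 hV
  have hWB : (W (fun j => (lam j - x)⁻¹)).det =
      (∏ j, (lam j - x)⁻¹) * (Bm c (Fin.snoc μ0 x) lam lp ls z).det := by
    rw [← Matrix.det_mul_column]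
    congr 1
    ext j k
    have := hx' j
    simp only [W, Bm, Matrix.of_apply, hXi, hVp, hVm]
    split_ifs <;> field_simp <;> ring
  have hP : ∏ j, ∏ k, (lam j - (Fin.snoc μ0 x : Fin (n + 1) → ℂ) k)⁻¹
      = (∏ j, ∏ k, (lam j - μ0 k)⁻¹) * ∏ j, (lam j - x)⁻¹ := by
    rw [← Finset.prod_mul_distrib]
    refine Finset.prod_congr rfl fun j _ => ?_
    simp only [Fin.prod_univ_castSucc (n := n), Fin.snoc_castSucc, Fin.snoc_last]
  have hd := mul_ne_zero (sub_ne_zero.mpr hVlp) (sub_ne_zero.mpr hVls)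
  beta_reduce
  rw [hWB]
  unfold HR
  rw [hP, eq_div_iff hd]
  rw [hXi] at key
  generalize (Vp c (Fin.snoc μ0 x) lam lp - Vm c (Fin.snoc μ0 x) lam lp) *
    (Vp c (Fin.snoc μ0 x) lam ls - Vm c (Fin.snoc μ0 x) lam ls) = D at key hd ⊢
  generalize (Bm c (Fin.snoc μ0 x) lam lp ls z).det = B at key ⊢
  have hz := hx' z
  have hXz := hX0 z
  rw [mul_assoc _ (∏ j, (Vp c (Fin.snoc μ0 x) lam (lam j) - Vm c (Fin.snoc μ0 x) lam (lam j)))]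
  generalize (∏ j, (Vp c (Fin.snoc μ0 x) lam (lam j) - Vm c (Fin.snoc μ0 x) lam (lam j))) *
    (1 + Umat c (Fin.snoc μ0 x) lam lp ls).det = E at key ⊢
  have hE : E = I * D * B * (X0 z)⁻¹ * (-(lam z - x)⁻¹) := by
    field_simp
    linear_combination -key
  rw [hE]
  simp only [C0]
  ring
end

section
/- Fix c ∈ ℂ with c ≠ 0, a square root √c, and N ≥ 1. Let λ_1,…,λ_{N+1} be pairwise distinct with λ_m−λ_j±ic ≠ 0, let μ_1,…,μ_{N−1}, λ_p, λ_s be fixed complex numbers satisfying the nondegeneracy hypotheses (for both the G expression below, built from N μ's, and for H_2 built from the N−1 parameters μ_1,…,μ_{N−1}). Then, as μ_N → ∞, G(μ_1,…,μ_N; λ_1,…,λ_{N+1}; λ_p,λ_s) → i√c · H_2(μ_1,…,μ_{N−1}; λ_1,…,λ_{N+1}; λ_p,λ_s). -/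
open Complex Finset Matrix

open LL



open Filter Topology

lemma aux_lin (a : ℂ) : Tendsto (fun x : ℂ => (x + a) * x⁻¹) (Bornology.cobounded ℂ) (𝓝 1) := by
  have h1 : Tendsto (fun x : ℂ => 1 + a * x⁻¹) (Bornology.cobounded ℂ) (𝓝 (1 + a * 0)) :=
    tendsto_const_nhds.add (tendsto_const_nhds.mul tendsto_inv₀_cobounded)
  rw [mul_zero, add_zero] at h1
  refine h1.congr' ?_
  filter_upwards [Bornology.eventually_ne_cobounded (0 : ℂ)] with x hx
  field_simp

lemma aux_W {n M : ℕ} (c : ℂ) (μ0 : Fin n → ℂ) (lam : Fin M → ℂ) (y : ℂ) :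
    Tendsto (fun x : ℂ => (Vp c (Fin.snoc μ0 x : Fin (n+1) → ℂ) lam y
      - Vm c (Fin.snoc μ0 x : Fin (n+1) → ℂ) lam y) * x⁻¹)
      (Bornology.cobounded ℂ) (𝓝 (Vp c μ0 lam y - Vm c μ0 lam y)) := by
  have h := ((aux_lin (- y + I * c)).const_mul (Vp c μ0 lam y)).sub
    ((aux_lin (- y - I * c)).const_mul (Vm c μ0 lam y))
  rw [mul_one, mul_one] at h
  refine h.congr fun x => ?_
  simp only [Vp, Vm, Fin.prod_univ_castSucc (n := n), Fin.snoc_castSucc, Fin.snoc_last]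
  ring

lemma aux_Xi {n M : ℕ} (μ0 : Fin n → ℂ) (lam : Fin M → ℂ) (j : Fin M) :
    Tendsto (fun x : ℂ => Xi (Fin.snoc μ0 x : Fin (n+1) → ℂ) lam j * x⁻¹)
      (Bornology.cobounded ℂ) (𝓝 (Xi μ0 lam j)) := by
  have h := (aux_lin (- lam j)).const_mul (Xi μ0 lam j)
  rw [mul_one] at h
  refine h.congr fun x => ?_
  simp only [Xi, Fin.prod_univ_castSucc (n := n), Fin.snoc_castSucc, Fin.snoc_last]
  ring

lemma aux_T {n M : ℕ} (μ0 : Fin n → ℂ) (lam : Fin M → ℂ) :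
    Tendsto (fun x : ℂ => Tcal (Fin.snoc μ0 x : Fin (n+1) → ℂ) lam * x⁻¹ * x⁻¹)
      (Bornology.cobounded ℂ) (𝓝 1) := by
  set p : ℂ := ∑ j, lam j - ∑ j, μ0 j with hp
  set e : ℂ := ∑ j, lam j ^ 2 - ∑ j, μ0 j ^ 2 with he
  have hi : Tendsto (fun x : ℂ => x⁻¹) (Bornology.cobounded ℂ) (𝓝 0) := tendsto_inv₀_cobounded
  have h : Tendsto (fun x : ℂ => 1 - p * x⁻¹ + (p ^ 2 - e) / 2 * (x⁻¹ * x⁻¹))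
      (Bornology.cobounded ℂ) (𝓝 (1 - p * 0 + (p ^ 2 - e) / 2 * (0 * 0))) :=
    (tendsto_const_nhds.sub (hi.const_mul p)).add ((hi.mul hi).const_mul _)
  have e1 : (1 - p * 0 + (p ^ 2 - e) / 2 * (0 * 0)) = 1 := by ring
  rw [e1] at h
  refine h.congr' ?_
  filter_upwards [Bornology.eventually_ne_cobounded (0 : ℂ)] with x hx
  have : Tcal (Fin.snoc μ0 x : Fin (n+1) → ℂ) lam = (1 / 2 : ℂ) * ((p - x) ^ 2 - (e - x ^ 2)) := by
    simp only [Tcal, Fin.sum_univ_castSucc (n := n), Fin.snoc_castSucc, Fin.snoc_last, hp, he]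
    ring
  rw [this]
  field_simp
  ring

lemma aux_U {n M : ℕ} (c : ℂ) (μ0 : Fin n → ℂ) (lam : Fin M → ℂ) (lp ls : ℂ)
    (hV : ∀ j, Vp c μ0 lam (lam j) ≠ Vm c μ0 lam (lam j)) :
    Tendsto (fun x : ℂ => (1 + Umat c (Fin.snoc μ0 x : Fin (n+1) → ℂ) lam lp ls).det)
      (Bornology.cobounded ℂ) (𝓝 (1 + Umat c μ0 lam lp ls).det) := by
  have hdet : Continuous (fun A : Matrix (Fin M) (Fin M) ℂ => A.det) := by fun_prop
  refine (hdet.tendsto _).comp (tendsto_const_nhds.add ?_)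
  refine tendsto_pi_nhds.2 fun j => tendsto_pi_nhds.2 fun k => ?_
  have h := (((tendsto_const_nhds (x := I)).div (aux_W c μ0 lam (lam j))
    (sub_ne_zero.2 (hV j))).mul (aux_Xi μ0 lam j)).mul_const
      (Kk c (lam j) (lam k) - Kk c lp (lam k) * Kk c ls (lam j))
  refine h.congr' ?_
  filter_upwards [Bornology.eventually_ne_cobounded (0 : ℂ)] with x hx
  simp only [Umat, Pi.div_apply, div_eq_mul_inv, mul_inv, inv_inv]
  field_simp

lemma aux_P {M : ℕ} (lam : Fin M → ℂ) :
    Tendsto (fun x : ℂ => ∏ j, (lam j - x)⁻¹ * x) (Bornology.cobounded ℂ) (𝓝 ((-1) ^ M)) := by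
  have h : Tendsto (fun x : ℂ => ∏ j, (lam j - x)⁻¹ * x) (Bornology.cobounded ℂ)
      (𝓝 (∏ _j : Fin M, (-1))) := by
    refine tendsto_finsetProd _ fun j _ => ?_
    have h := ((aux_lin (- lam j)).neg).inv₀ (by simp)
    have e1 : ((-1 : ℂ))⁻¹ = -1 := by norm_num
    rw [e1] at h
    refine h.congr fun x => ?_
    rw [← neg_mul, mul_inv, inv_inv]
    congr 2
    ring
  simpa using h

/-- Asymptotics (property 2 with `h = 1, k = 2`): as `μ_N → ∞`, the determinant formula `G`
for the form factor of `Ψ†(0)Ψ²(0)` (built from `N` μ's and `N+1` λ's) tends to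
`i√c · H₂(μ₁,…,μ_{N−1}; λ₁,…,λ_{N+1})`. -/
theorem G_tendsto_at_infty {n : ℕ} (c sc : ℂ) (hc : c ≠ 0) (hsc : sc ^ 2 = c)
    (μ0 : Fin n → ℂ) (lam : Fin (n + 2) → ℂ) (hinj : Function.Injective lam)
    (lp ls : ℂ)
    (hmulam : ∀ k j, μ0 k ≠ lam j)
    (hpm : ∀ j k, lam j - lam k + I * c ≠ 0 ∧ lam j - lam k - I * c ≠ 0)
    (hp1 : ∀ j, (lp - lam j) ^ 2 + c ^ 2 ≠ 0)
    (hs1 : ∀ j, (ls - lam j) ^ 2 + c ^ 2 ≠ 0)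
    (hVred : ∀ j, Vp c μ0 lam (lam j) ≠ Vm c μ0 lam (lam j))
    (hVredp : Vp c μ0 lam lp ≠ Vm c μ0 lam lp)
    (hVreds : Vp c μ0 lam ls ≠ Vm c μ0 lam ls) :
    Filter.Tendsto (fun x : ℂ => Gff c sc (Fin.snoc μ0 x) lam lp ls)
      (Bornology.cobounded ℂ ⊓ Filter.principal
        {x : ℂ |
          (∀ j, x ≠ lam j) ∧
          (∀ j, Vp c (Fin.snoc μ0 x) lam (lam j) ≠ Vm c (Fin.snoc μ0 x) lam (lam j)) ∧
          Vp c (Fin.snoc μ0 x) lam lp ≠ Vm c (Fin.snoc μ0 x) lam lp ∧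
          Vp c (Fin.snoc μ0 x) lam ls ≠ Vm c (Fin.snoc μ0 x) lam ls})
      (nhds (I * sc * HR c sc 2 μ0 lam lp ls)) := by
  have hs0 : sc ≠ 0 := by rintro rfl; apply hc; rw [← hsc]; ring
  refine Tendsto.mono_left ?_ inf_le_left
  have hW := tendsto_finsetProd (Finset.univ : Finset (Fin (n+2)))
    fun j _ => aux_W c μ0 lam (lam j)
  have hden := (aux_W c μ0 lam lp).mul (aux_W c μ0 lam ls)
  have hden0 := mul_ne_zero (sub_ne_zero.2 hVredp) (sub_ne_zero.2 hVreds)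
  have h := (((((aux_T μ0 lam).const_mul (-I / (c * sc) *
    (∏ j, ∏ k, (lam j - lam k + I * c)) * (∏ j, ∏ k, (lam j - μ0 k)⁻¹))).mul (aux_P lam)).mul
      hW).mul (aux_U c μ0 lam lp ls hVred)).div hden hden0
  have key : I * sc * HR c sc 2 μ0 lam lp ls = (-I / (c * sc) *
    (∏ j, ∏ k, (lam j - lam k + I * c)) * (∏ j, ∏ k, (lam j - μ0 k)⁻¹)) * 1 * (-1) ^ (n+2) *
    (∏ j, (Vp c μ0 lam (lam j) - Vm c μ0 lam (lam j))) *
    (1 + Umat c μ0 lam lp ls).det /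
    ((Vp c μ0 lam lp - Vm c μ0 lam lp) * (Vp c μ0 lam ls - Vm c μ0 lam ls)) := by
    have e1 : I * sc * ((I * sc) ^ 2 / (c ^ (2 * 2 - 1) * ((2 - 1).factorial : ℂ)))
        = -I / (c * sc) := by
      have : (I * sc) ^ 2 = - c := by rw [mul_pow, hsc, I_sq]; ring
      rw [this]
      norm_num
      field_simp
      rw [← hsc]
    have e2 : (-1 : ℂ) ^ (n * (2 - 1)) = (-1) ^ (n + 2) := by
      rw [pow_add]; norm_num
    rw [← e1, ← e2]
    unfold HR
    ring
  rw [key]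
  refine h.congr' ?_
  filter_upwards [Bornology.eventually_ne_cobounded (0 : ℂ)] with x hx
  have eP : (∏ j, ∏ k, (lam j - (Fin.snoc μ0 x : Fin (n+1) → ℂ) k)⁻¹) =
      (∏ j, ∏ k, (lam j - μ0 k)⁻¹) * ∏ j, (lam j - x)⁻¹ := by
    simp only [Fin.prod_univ_castSucc (n := n), Fin.snoc_castSucc, Fin.snoc_last,
      Finset.prod_mul_distrib]
  simp only [Gff, eP, Pi.div_apply]
  rw [Finset.prod_mul_distrib, Finset.prod_mul_distrib]
  simp only [Finset.prod_const, Finset.card_univ, Fintype.card_fin, inv_pow]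
  generalize (∏ j, ∏ k, (lam j - lam k + I * c)) = a1
  generalize (∏ j, ∏ k, (lam j - μ0 k)⁻¹) = a2
  generalize (∏ j, (lam j - x)⁻¹) = a3
  generalize (∏ j, (Vp c (Fin.snoc μ0 x : Fin (n+1) → ℂ) lam (lam j) - Vm c (Fin.snoc μ0 x : Fin (n+1) → ℂ) lam (lam j))) = a4
  generalize (1 + Umat c (Fin.snoc μ0 x : Fin (n+1) → ℂ) lam lp ls).det = a5
  generalize Vp c (Fin.snoc μ0 x : Fin (n+1) → ℂ) lam lp - Vm c (Fin.snoc μ0 x : Fin (n+1) → ℂ) lam lp = a6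
  generalize Vp c (Fin.snoc μ0 x : Fin (n+1) → ℂ) lam ls - Vm c (Fin.snoc μ0 x : Fin (n+1) → ℂ) lam ls = a7
  generalize Tcal (Fin.snoc μ0 x : Fin (n+1) → ℂ) lam = a8
  simp only [div_eq_mul_inv, mul_inv, inv_inv]
  field_simp
end

section
/- Fix c ∈ ℂ with c ≠ 0 and N ≥ 1. Let μ_1,…,μ_N and pairwise distinct λ_1,…,λ_N be complex numbers satisfying μ_k ≠ λ_j and λ_m−λ_j±ic ≠ 0, let λ_p, λ_s be admissible auxiliary parameters, and assume P_λ ≠ P_μ, where P_λ = Σ_j λ_j and P_μ = Σ_j μ_j. Then (−1)^N (𝒥/(6c))·Π·∏_{j=1}^{N}(V⁺_j−V⁻_j)·det_N(δ_{jk}+U_{jk})/[(V⁺_p−V⁻_p)(V⁺_s−V⁻_s)] = (−1)^{N+1}·[i𝒥/(6c(P_λ−P_μ))]·Π·∏_{j=1}^{N}(V⁺_j−V⁻_j)·det_N(δ_{jk}+U^{(1)}_{jk})/(V⁺_p−V⁻_p), where Π = ∏_{j,k=1}^{N}(λ_j−λ_k+ic)·∏_{j,k=1}^{N}(λ_j−μ_k)^{−1}.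 -/
open Complex Finset Matrix

open LL

section aux
open Polynomial in
lemma poly_deg {N : ℕ} (hN : 1 ≤ N) (μ lam : Fin N → ℂ) :
    ((∏ i, (X - C (μ i))) - ∏ i, (X - C (lam i))).degree < ((univ : Finset (Fin N)).card : WithBot ℕ) := by
  have h1 := monic_prod_X_sub_C μ univ
  have h2 := monic_prod_X_sub_C lam univ
  have d : ∀ f : Fin N → ℂ, (∏ i, (X - C (f i))).degree = (N : WithBot ℕ) := by
    intro f
    simp [degree_prod]
  have := degree_sub_lt (p := ∏ i, (X - C (μ i))) (q := ∏ i, (X - C (lam i)))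
    (by rw [d, d]) h1.ne_zero (by rw [h1.leadingCoeff, h2.leadingCoeff])
  rw [d] at this
  simpa using this

lemma Xi_eq {N : ℕ} (μ lam : Fin N → ℂ) (j : Fin N) :
    Xi μ lam j = -((∏ m, (lam j - μ m)) / ∏ m ∈ univ.erase j, (lam j - lam m)) := by
  unfold Xi
  have h1 : ∏ m, (μ m - lam j) = (-1) ^ N * ∏ m, (lam j - μ m) := by
    rw [← Finset.prod_congr rfl (fun m _ => neg_sub (lam j) (μ m)), Finset.prod_neg]
    simp
  have h2 : ∏ m ∈ univ.erase j, (lam m - lam j)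
      = (-1) ^ (N - 1) * ∏ m ∈ univ.erase j, (lam j - lam m) := by
    rw [← Finset.prod_congr rfl (fun m _ => neg_sub (lam j) (lam m)), Finset.prod_neg]
    simp
  obtain ⟨n, rfl⟩ : ∃ n, N = n + 1 := ⟨N - 1, by have := j.pos; omega⟩
  rw [h1, h2, Nat.add_sub_cancel, pow_succ, mul_neg_one, neg_mul, neg_div,
    mul_div_mul_left _ _ (pow_ne_zero _ (by norm_num))]

open Polynomial in
lemma eval_at {N : ℕ} (μ lam : Fin N → ℂ) (j : Fin N) :
    ((∏ i, (X - C (μ i))) - ∏ i, (X - C (lam i))).eval (lam j) = ∏ m, (lam j - μ m) := by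
  rw [eval_sub, eval_prod, eval_prod, Finset.prod_eq_zero (f := fun i => eval (lam j) (X - C (lam i)))
    (mem_univ j) (by simp)]
  simp

open Polynomial in
lemma sum_Xi {N : ℕ} (hN : 1 ≤ N) (μ lam : Fin N → ℂ) (hinj : Function.Injective lam) :
    ∑ j, Xi μ lam j = -(∑ j, lam j - ∑ j, μ j) := by
  have h := Lagrange.coeff_eq_sum (s := univ) (v := lam) hinj.injOn (poly_deg hN μ lam)
  rw [coeff_sub, prod_X_sub_C_coeff_card_pred _ _ (by simp; omega),
    prod_X_sub_C_coeff_card_pred _ _ (by simp; omega)] at h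
  simp only [eval_at] at h
  simp only [Xi_eq, Finset.sum_neg_distrib, ← h]
  ring

open Polynomial in
lemma pfrac {N : ℕ} (hN : 1 ≤ N) (μ lam : Fin N → ℂ) (hinj : Function.Injective lam)
    (z : ℂ) (hz : ∀ j, z ≠ lam j) :
    (∏ m, (μ m - z)) / ∏ m, (lam m - z) = 1 + ∑ j, Xi μ lam j * (lam j - z)⁻¹ := by
  have h := congrArg (eval z)
    (Lagrange.eq_interpolate (s := univ) (v := lam) hinj.injOn (poly_deg hN μ lam))
  rw [Lagrange.eval_interpolate_not_at_node _ (fun i _ => hz i)] at h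
  simp only [eval_at] at h
  rw [eval_sub, eval_prod, eval_prod, Lagrange.eval_nodal] at h
  simp only [eval_sub, eval_X, eval_C] at h
  have h1 : ∀ f : Fin N → ℂ, ∏ m, (f m - z) = (-1) ^ N * ∏ m, (z - f m) := by
    intro f
    rw [← Finset.prod_congr rfl (fun m _ => neg_sub z (f m)), Finset.prod_neg]
    simp
  have hne : ∏ m, (z - lam m) ≠ 0 :=
    Finset.prod_ne_zero_iff.mpr fun m _ => sub_ne_zero.mpr (hz m)
  rw [h1, h1, mul_div_mul_left _ _ (pow_ne_zero _ (by norm_num)), div_eq_iff hne]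
  have h3 : ∑ j, Xi μ lam j * (lam j - z)⁻¹
      = ∑ i, Lagrange.nodalWeight univ lam i * (z - lam i)⁻¹ * ∏ m, (lam i - μ m) := by
    refine Finset.sum_congr rfl fun i _ => ?_
    rw [Xi_eq, Lagrange.nodalWeight, Finset.prod_inv_distrib, ← neg_sub z (lam i), inv_neg]
    ring
  rw [h3]
  linear_combination h

lemma W_eq {N : ℕ} (hN : 1 ≤ N) (c : ℂ) (μ lam : Fin N → ℂ) (hinj : Function.Injective lam)
    (x : ℂ) (hx : ∀ j, (x - lam j) ^ 2 + c ^ 2 ≠ 0) :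
    Vp c μ lam x - Vm c μ lam x = -I * ∑ j, Xi μ lam j * Kk c x (lam j) := by
  have hf : ∀ j, (x - lam j) ^ 2 + c ^ 2 = (lam j - x + I * c) * (lam j - x - I * c) := by
    intro j
    linear_combination (c ^ 2) * I_sq
  have ha : ∀ j, lam j - x + I * c ≠ 0 := fun j h => hx j (by rw [hf, h, zero_mul])
  have hb : ∀ j, lam j - x - I * c ≠ 0 := fun j h => hx j (by rw [hf, h, mul_zero])
  have h1 := pfrac hN μ lam hinj (x - I * c) (fun j h => ha j (by rw [← h]; ring))
  have h2 := pfrac hN μ lam hinj (x + I * c) (fun j h => hb j (by rw [← h]; ring))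
  simp only [← sub_add, ← sub_sub] at h1 h2
  unfold Vp Vm
  rw [h1, h2, add_sub_add_left_eq_sub, ← Finset.sum_sub_distrib, Finset.mul_sum]
  refine Finset.sum_congr rfl fun j _ => ?_
  rw [Kk, hf]
  have := ha j
  have := hb j
  field_simp
  ring

lemma det_key {N : ℕ} (A : Matrix (Fin N) (Fin N) ℂ) (w v x : Fin N → ℂ)
    (hA : ∀ k, ∑ j, w j * A j k = 0) (k : Fin N) :
    w k * (Matrix.of fun i j => A i j - x i * v j).det
      = -(∑ j, w j * x j) * (A.updateRow k v).det := by
  rw [← smul_eq_mul, ← det_updateRow_sum]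
  have h : (∑ i, w i • (Matrix.of fun i j => A i j - x i * v j) i)
      = (-(∑ j, w j * x j)) • v := by
    ext l
    simp only [Finset.sum_apply, Pi.smul_apply, of_apply, smul_eq_mul, mul_sub,
      Finset.sum_sub_distrib, hA, zero_sub, neg_mul, Finset.sum_mul, mul_assoc]
  rw [h, det_updateRow_smul]
  congr 1
  refine det_eq_of_forall_row_eq_smul_add_const (fun i => if i = k then 0 else - x i) k (by simp) ?_
  intro i j
  by_cases hi : i = k
  · subst hi; simp
  · simp [hi, Matrix.updateRow_ne]; ring

end aux

/-- Equivalence of the two determinant formulas for the form factor of `(Ψ†(0))²Ψ²(0)`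
when the two states have different total momentum `P_λ ≠ P_μ`. -/
theorem F_eq_different_momentum {N : ℕ} (hN : 1 ≤ N) (c : ℂ) (hc : c ≠ 0)
    (μ lam : Fin N → ℂ) (hinj : Function.Injective lam)
    (hmulam : ∀ k j, μ k ≠ lam j)
    (hpm : ∀ j k, lam j - lam k + I * c ≠ 0 ∧ lam j - lam k - I * c ≠ 0)
    (lp ls : ℂ)
    (hp1 : ∀ j, (lp - lam j) ^ 2 + c ^ 2 ≠ 0)
    (hs1 : ∀ j, (ls - lam j) ^ 2 + c ^ 2 ≠ 0)
    (hV : ∀ j, Vp c μ lam (lam j) ≠ Vm c μ lam (lam j))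
    (hVp : Vp c μ lam lp ≠ Vm c μ lam lp)
    (hVs : Vp c μ lam ls ≠ Vm c μ lam ls)
    (hP : ∑ j, lam j ≠ ∑ j, μ j) :
    (-1 : ℂ) ^ N * (Jcal μ lam / (6 * c)) *
        ((∏ j, ∏ k, (lam j - lam k + I * c)) * ∏ j, ∏ k, (lam j - μ k)⁻¹) *
        (∏ j, (Vp c μ lam (lam j) - Vm c μ lam (lam j))) *
        (1 + Umat c μ lam lp ls).det /
        ((Vp c μ lam lp - Vm c μ lam lp) * (Vp c μ lam ls - Vm c μ lam ls)) =
      (-1 : ℂ) ^ (N + 1) *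
        (I * Jcal μ lam / (6 * c * (∑ j, lam j - ∑ j, μ j))) *
        ((∏ j, ∏ k, (lam j - lam k + I * c)) * ∏ j, ∏ k, (lam j - μ k)⁻¹) *
        (∏ j, (Vp c μ lam (lam j) - Vm c μ lam (lam j))) *
        (1 + U1mat c μ lam lp).det /
        (Vp c μ lam lp - Vm c μ lam lp) := by
  set w : Fin N → ℂ := fun j => Vp c μ lam (lam j) - Vm c μ lam (lam j) with hw
  have hw0 : ∀ j, w j ≠ 0 := fun j => sub_ne_zero.mpr (hV j)
  have hll : ∀ i j, (lam i - lam j) ^ 2 + c ^ 2 ≠ 0 := by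
    intro i j h
    refine mul_ne_zero (hpm i j).1 (hpm i j).2 ?_
    linear_combination h - c ^ 2 * I_sq
  have hWl : ∀ k, w k = -I * ∑ j, Xi μ lam j * Kk c (lam k) (lam j) :=
    fun k => W_eq hN c μ lam hinj (lam k) (hll k)
  have hWs := W_eq hN c μ lam hinj ls hs1
  have hsX := sum_Xi hN μ lam hinj
  have hKs : ∀ a b, Kk c a b = Kk c b a := by
    intro a b
    unfold Kk
    rw [← neg_sub b a, neg_sq]
  set A : Matrix (Fin N) (Fin N) ℂ :=
    1 + Matrix.of (fun j k => I / w j * Xi μ lam j * Kk c (lam j) (lam k)) with hAdef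
  have hA : ∀ k, ∑ j, w j * A j k = 0 := by
    intro k
    simp only [hAdef, Matrix.add_apply, of_apply, mul_add, Finset.sum_add_distrib]
    have e1 : ∑ j, w j * (1 : Matrix (Fin N) (Fin N) ℂ) j k = w k := by
      simp [Matrix.one_apply]
    have e2 : ∑ j, w j * (I / w j * Xi μ lam j * Kk c (lam j) (lam k))
        = I * ∑ j, Xi μ lam j * Kk c (lam k) (lam j) := by
      rw [Finset.mul_sum]
      refine Finset.sum_congr rfl fun j _ => ?_
      rw [hKs (lam k)]
      have := hw0 j
      field_simp
    rw [e1, e2, hWl k]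
    ring
  have hk := det_key A w (fun k => Kk c lp (lam k))
  have hU : (1 + Umat c μ lam lp ls) = Matrix.of fun i j =>
      A i j - (I / w i * Xi μ lam i * Kk c ls (lam i)) * Kk c lp (lam j) := by
    ext i j
    simp only [Umat, hAdef, Matrix.add_apply, of_apply, hw]
    ring
  have hU1 : (1 + U1mat c μ lam lp) = Matrix.of fun i j =>
      A i j - (I / w i * Xi μ lam i) * Kk c lp (lam j) := by
    ext i j
    simp only [U1mat, hAdef, Matrix.add_apply, of_apply, hw]
    ring
  have k0 : Fin N := ⟨0, hN⟩
  have d1 := hk (fun i => I / w i * Xi μ lam i * Kk c ls (lam i)) hA k0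
  have d2 := hk (fun i => I / w i * Xi μ lam i) hA k0
  rw [← hU] at d1
  rw [← hU1] at d2
  have s1 : ∑ j, w j * (I / w j * Xi μ lam j * Kk c ls (lam j))
      = -(Vp c μ lam ls - Vm c μ lam ls) := by
    rw [hWs, neg_mul, neg_neg, Finset.mul_sum]
    refine Finset.sum_congr rfl fun j _ => ?_
    have := hw0 j
    field_simp
  have s2 : ∑ j, w j * (I / w j * Xi μ lam j) = -I * (∑ j, lam j - ∑ j, μ j) := by
    have : -I * (∑ j, lam j - ∑ j, μ j) = I * ∑ j, Xi μ lam j := by rw [hsX]; ring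
    rw [this, Finset.mul_sum]
    refine Finset.sum_congr rfl fun j _ => ?_
    have := hw0 j
    field_simp
  rw [s1] at d1
  rw [s2] at d2
  have hP' : (∑ j, lam j - ∑ j, μ j) ≠ 0 := sub_ne_zero.mpr hP
  have hs' : Vp c μ lam ls - Vm c μ lam ls ≠ 0 := sub_ne_zero.mpr hVs
  have hp' : Vp c μ lam lp - Vm c μ lam lp ≠ 0 := sub_ne_zero.mpr hVp
  have key : (1 + Umat c μ lam lp ls).det * (∑ j, lam j - ∑ j, μ j)
      = -I * (1 + U1mat c μ lam lp).det * (Vp c μ lam ls - Vm c μ lam ls) := by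
    apply mul_left_cancel₀ (hw0 k0)
    linear_combination (∑ j, lam j - ∑ j, μ j) * d1 + I * (Vp c μ lam ls - Vm c μ lam ls) * d2
      + (∑ j, lam j - ∑ j, μ j) * (Vp c μ lam ls - Vm c μ lam ls) * (A.updateRow k0 (fun k => Kk c lp (lam k))).det * I_sq
  clear_value w A
  generalize (1 + Umat c μ lam lp ls).det = D at *
  generalize (1 + U1mat c μ lam lp).det = D1 at *
  generalize (∑ j, lam j - ∑ j, μ j) = P at *
  generalize Vp c μ lam ls - Vm c μ lam ls = S at *
  generalize Vp c μ lam lp - Vm c μ lam lp = Q at *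
  have hD : D = -I * D1 * S / P := by rw [eq_div_iff hP', key]
  rw [hD, pow_succ]
  field_simp
end
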